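/- arXiv:1206.5197 — 3 statements merged into one kernel-verified Lean document; each statement's English description precedes it below -/
import Mathlib

section
/- Let E ⊆ ℝ^n be a Lebesgue-measurable set and f : E → ℝ^m a measurable mapping. Suppose that for each j = 1, …, n the mapping f has an approximate partial derivative ap ∂_j f(x) along the coordinate direction e_j at almost every point x ∈ E. Then f is approximately differentiable at almost every point of E, and at almost every such point the approximate differential L of f satisfies L(e_j) = ap ∂_j f(x) for all j = 1, …, n. -/
open MeasureTheory Metric Filter Set Function
open scoped Topology ENNReal NNReal

/-- `Y` has density `d` at the point `x` with respect to the measure `μ`. -/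
def HasDensityAt {X : Type*} [PseudoMetricSpace X] [MeasurableSpace X]
    (μ : Measure X) (Y : Set X) (x : X) (d : ℝ≥0∞) : Prop :=
  Tendsto (fun r : ℝ => μ (Y ∩ ball x r) / μ (ball x r)) (𝓝[>] (0 : ℝ)) (𝓝 d)

/-- `L` is an approximate differential of `f` (as a map defined on `E`) at `a`. -/
def IsApproxDifferential {n m : ℕ} (E : Set (EuclideanSpace ℝ (Fin n)))
    (f : EuclideanSpace ℝ (Fin n) → EuclideanSpace ℝ (Fin m))
    (a : EuclideanSpace ℝ (Fin n))
    (L : EuclideanSpace ℝ (Fin n) →ₗ[ℝ] EuclideanSpace ℝ (Fin m)) : Prop :=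
  ∀ ε : ℝ, 0 < ε →
    HasDensityAt volume {x ∈ E | ε * ‖x - a‖ < ‖f x - f a - L (x - a)‖} a 0

/-- `v` is an approximate partial derivative of `f` (as a map defined on `E`) along the
coordinate direction `e j` at `x`. -/
def HasApproxPartialDerivAt {n m : ℕ} (E : Set (EuclideanSpace ℝ (Fin n)))
    (f : EuclideanSpace ℝ (Fin n) → EuclideanSpace ℝ (Fin m)) (j : Fin n)
    (x : EuclideanSpace ℝ (Fin n)) (v : EuclideanSpace ℝ (Fin m)) : Prop :=
  ∀ ε : ℝ, 0 < ε →
    HasDensityAt (volume : Measure ℝ)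
      {t : ℝ | x + t • EuclideanSpace.single j (1 : ℝ) ∈ E ∧
        ε * |t| < ‖f (x + t • EuclideanSpace.single j (1 : ℝ)) - f x - t • v‖} 0 0

lemma HasDensityAt.mono' {X : Type*} [PseudoMetricSpace X] [MeasurableSpace X]
    {μ : Measure X} {Y Z : Set X} {x : X} (h : HasDensityAt μ Y x 0) {δ : ℝ} (hδ : 0 < δ)
    (hZ : ∀ z ∈ Z, dist z x < δ → z ∈ Y) : HasDensityAt μ Z x 0 := by
  refine tendsto_of_tendsto_of_tendsto_of_le_of_le' tendsto_const_nhds h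
    (Eventually.of_forall fun _ => zero_le) ?_
  filter_upwards [Ioo_mem_nhdsGT hδ] with r hr
  refine ENNReal.div_le_div_right (measure_mono ?_) _
  rintro z ⟨hz, hzr⟩
  exact ⟨hZ z hz (lt_trans hzr hr.2), hzr⟩

lemma HasDensityAt.union' {X : Type*} [PseudoMetricSpace X] [MeasurableSpace X]
    {μ : Measure X} {Y Z : Set X} {x : X} (h : HasDensityAt μ Y x 0) (h' : HasDensityAt μ Z x 0) :
    HasDensityAt μ (Y ∪ Z) x 0 := by
  have := Tendsto.add h h'
  rw [add_zero] at this
  refine tendsto_of_tendsto_of_tendsto_of_le_of_le' tendsto_const_nhds this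
    (Eventually.of_forall fun _ => zero_le) ?_
  filter_upwards with r
  rw [← ENNReal.add_div]
  refine ENNReal.div_le_div_right ?_ _
  rw [union_inter_distrib_right]
  exact measure_union_le _ _

lemma density_crit (Y : Set ℝ) : HasDensityAt (volume : Measure ℝ) Y 0 0 ↔
    ∀ m : ℕ, ∃ N : ℕ, ∀ q : ℚ, 0 < q → (q : ℝ) < 1 / ((N : ℝ) + 1) →
      volume (Y ∩ ball 0 (q : ℝ)) ≤ ENNReal.ofReal ((q : ℝ) / ((m : ℝ) + 1)) := by
  unfold HasDensityAt
  rw [ENNReal.tendsto_nhds_zero]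
  constructor
  · intro h m
    have h1 := h (ENNReal.ofReal (1 / (2 * ((m : ℝ) + 1)))) (by
      simp only [gt_iff_lt, ENNReal.ofReal_pos]; positivity)
    rw [eventually_iff, mem_nhdsGT_iff_exists_Ioo_subset] at h1
    obtain ⟨u, hu, hsub⟩ := h1
    obtain ⟨N, hN⟩ := exists_nat_one_div_lt (mem_Ioi.1 hu)
    refine ⟨N, fun q hq hqN => ?_⟩
    have hq' : (0 : ℝ) < q := by exact_mod_cast hq
    have h2 := hsub ⟨hq', hqN.trans hN⟩
    simp only [mem_setOf_eq, Real.volume_ball] at h2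
    rw [ENNReal.div_le_iff (by simpa using hq') ENNReal.ofReal_ne_top,
      ← ENNReal.ofReal_mul (by positivity)] at h2
    convert h2 using 2
    field_simp
  · intro h ε hε
    obtain ⟨m, hm⟩ := ENNReal.exists_inv_nat_lt hε.ne'
    obtain ⟨N, hN⟩ := h m
    have hpos : (0 : ℝ) < 1 / ((N : ℝ) + 1) / 2 := by positivity
    filter_upwards [Ioo_mem_nhdsGT hpos] with r hr
    obtain ⟨q, hq1, hq2⟩ := exists_rat_btwn (show r < 2 * r by linarith [hr.1])
    have hq0 : (0 : ℝ) < q := hr.1.trans hq1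
    have h1 := hN q (by exact_mod_cast hq0) (by linarith [hr.2])
    rw [Real.volume_ball, ENNReal.div_le_iff (by simpa using hr.1) ENNReal.ofReal_ne_top]
    calc volume (Y ∩ ball 0 r) ≤ volume (Y ∩ ball 0 (q : ℝ)) :=
          measure_mono (inter_subset_inter_right _ (ball_subset_ball hq1.le))
      _ ≤ _ := h1
      _ ≤ ENNReal.ofReal (((m : ℝ) + 1)⁻¹ * (2 * r)) := by
          apply ENNReal.ofReal_le_ofReal
          rw [div_eq_inv_mul]
          gcongr
      _ ≤ ε * ENNReal.ofReal (2 * r) := by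
          rw [ENNReal.ofReal_mul (by positivity)]
          gcongr
          refine le_trans ?_ hm.le
          rw [ENNReal.ofReal_inv_of_pos (by positivity)]
          apply ENNReal.inv_le_inv.2
          rw [← ENNReal.ofReal_natCast]
          exact ENNReal.ofReal_le_ofReal (by linarith)

lemma ae_density_compl {X : Type*} [NormedAddCommGroup X] [NormedSpace ℝ X]
    [FiniteDimensional ℝ X] [MeasurableSpace X] [BorelSpace X]
    (μ : Measure X) [μ.IsAddHaarMeasure] {K : Set X}
    (hK : MeasurableSet K) : ∀ᵐ x ∂μ, x ∈ K → HasDensityAt μ Kᶜ x 0 := by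
  filter_upwards [Besicovitch.ae_tendsto_measure_inter_div_of_measurableSet μ hK.compl] with x hx hxK
  rw [indicator_of_notMem (by simpa using hxK)] at hx
  refine tendsto_of_tendsto_of_tendsto_of_le_of_le' tendsto_const_nhds hx
    (Eventually.of_forall fun _ => zero_le) ?_
  filter_upwards [self_mem_nhdsWithin] with r hr
  have hr : 0 < r := hr
  rw [Measure.addHaar_closedBall μ x hr.le, Measure.addHaar_ball_of_pos μ x hr]
  exact ENNReal.div_le_div_right
    (measure_mono (inter_subset_inter_right _ ball_subset_closedBall)) _

lemma measurable_section {X : Type*} [MeasurableSpace X] (B : Set (X × ℝ)) (hB : MeasurableSet B)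
    (q : ℝ) : Measurable fun x => volume ({t : ℝ | (x, t) ∈ B} ∩ ball 0 q) := by
  have : MeasurableSet (B ∩ (univ ×ˢ ball (0 : ℝ) q)) :=
    hB.inter (MeasurableSet.univ.prod measurableSet_ball)
  convert measurable_measure_prodMk_left (ν := (volume : Measure ℝ)) this using 3
  ext t
  simp

lemma measurableSet_dens {X : Type*} [MeasurableSpace X] (B : Set (X × ℝ)) (hB : MeasurableSet B)
    (m N : ℕ) : MeasurableSet {x | ∀ q : ℚ, 0 < q → (q : ℝ) < 1 / ((N : ℝ) + 1) →
      volume ({t : ℝ | (x, t) ∈ B} ∩ ball 0 (q : ℝ)) ≤ ENNReal.ofReal ((q : ℝ) / ((m : ℝ) + 1))} := by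
  simp only [setOf_forall]
  refine MeasurableSet.iInter fun q => MeasurableSet.iInter fun _ => MeasurableSet.iInter fun _ => ?_
  exact measurableSet_le (measurable_section B hB q) measurable_const

section helpers

variable {n m : ℕ}

lemma measurable_line (i : Fin n) :
    Measurable fun p : EuclideanSpace ℝ (Fin n) × ℝ =>
      p.1 + p.2 • EuclideanSpace.single i (1 : ℝ) := by
  fun_prop

lemma ae_line_density (i : Fin n) {K : Set (EuclideanSpace ℝ (Fin n))} (hK : MeasurableSet K) :
    ∀ᵐ x ∂(volume : Measure (EuclideanSpace ℝ (Fin n))), x ∈ K →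
      HasDensityAt (volume : Measure ℝ)
        {t : ℝ | x + t • EuclideanSpace.single i (1 : ℝ) ∉ K} 0 0 := by
  set B : Set (EuclideanSpace ℝ (Fin n) × ℝ) :=
    {p | p.1 + p.2 • EuclideanSpace.single i (1 : ℝ) ∉ K} with hBdef
  have hB : MeasurableSet B := (measurable_line i) hK.compl
  have hS : MeasurableSet {x | x ∈ K → HasDensityAt (volume : Measure ℝ)
        {t : ℝ | (x, t) ∈ B} 0 0} := by
    have : {x | x ∈ K → HasDensityAt (volume : Measure ℝ) {t : ℝ | (x, t) ∈ B} 0 0}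
        = Kᶜ ∪ {x | HasDensityAt (volume : Measure ℝ) {t : ℝ | (x, t) ∈ B} 0 0} := by
      ext x; simp [imp_iff_not_or]
    rw [this]
    refine hK.compl.union ?_
    simp only [density_crit]
    rw [setOf_forall]
    refine MeasurableSet.iInter fun m => ?_
    rw [setOf_exists]
    exact MeasurableSet.iUnion fun N => measurableSet_dens B hB m N
  refine ae_mem_of_ae_add_linearMap_mem
    (LinearMap.toSpanSingleton ℝ (EuclideanSpace ℝ (Fin n)) (EuclideanSpace.single i (1 : ℝ)))
    (volume : Measure ℝ) volume hS ?_
  intro y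
  have hK' : MeasurableSet {t : ℝ | y + t • EuclideanSpace.single i (1 : ℝ) ∈ K} := by
    have : Measurable fun t : ℝ => y + t • EuclideanSpace.single i (1 : ℝ) := by fun_prop
    exact this hK
  filter_upwards [ae_density_compl (volume : Measure ℝ) hK'] with s hs hsK
  have h1 := hs hsK
  unfold HasDensityAt at h1 ⊢
  refine h1.congr fun r => ?_
  congr 1
  · rw [← measure_preimage_add_right volume s]
    congr 1
    ext t
    simp [hBdef, add_smul, Real.ball_eq_Ioo, add_assoc, add_comm (t • EuclideanSpace.single i (1:ℝ))]
  · simp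

/-- `f` is Lipschitz at small scales on pairs of points of `K` differing only in `s`. -/
def QLip (f : EuclideanSpace ℝ (Fin n) → EuclideanSpace ℝ (Fin m)) (s : Finset (Fin n))
    (K : Set (EuclideanSpace ℝ (Fin n))) : Prop :=
  ∃ C δ : ℝ, 0 ≤ C ∧ 0 < δ ∧ ∀ x ∈ K, ∀ y ∈ K, (∀ i ∉ s, x i = y i) → ‖x - y‖ < δ →
    ‖f x - f y‖ ≤ C * ‖x - y‖

/-- The bad set. -/
def BadSet (f : EuclideanSpace ℝ (Fin n) → EuclideanSpace ℝ (Fin m)) (i : Fin n)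
    (K : Set (EuclideanSpace ℝ (Fin n))) (k : ℕ) : Set (EuclideanSpace ℝ (Fin n) × ℝ) :=
  {p | p.1 + p.2 • EuclideanSpace.single i (1 : ℝ) ∈ K →
    (k : ℝ) * |p.2| < ‖f (p.1 + p.2 • EuclideanSpace.single i (1 : ℝ)) - f p.1‖}

/-- The refined set. -/
def Refine (f : EuclideanSpace ℝ (Fin n) → EuclideanSpace ℝ (Fin m)) (i : Fin n)
    (K : Set (EuclideanSpace ℝ (Fin n))) (k N : ℕ) : Set (EuclideanSpace ℝ (Fin n)) :=
  K ∩ {x | ∀ q : ℚ, 0 < q → (q : ℝ) < 1 / ((N : ℝ) + 1) →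
      volume ({t : ℝ | (x, t) ∈ BadSet f i K k} ∩ ball 0 (q : ℝ))
        ≤ ENNReal.ofReal ((q : ℝ) / (((3 : ℕ) : ℝ) + 1))}

lemma measurableSet_badSet {f : EuclideanSpace ℝ (Fin n) → EuclideanSpace ℝ (Fin m)}
    (hf : Measurable f) (i : Fin n) {K : Set (EuclideanSpace ℝ (Fin n))} (hK : MeasurableSet K)
    (k : ℕ) : MeasurableSet (BadSet f i K k) := by
  have h1 := measurable_line i
  have : BadSet f i K k = {p | p.1 + p.2 • EuclideanSpace.single i (1 : ℝ) ∈ K}ᶜ ∪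
    {p | (k : ℝ) * |p.2| < ‖f (p.1 + p.2 • EuclideanSpace.single i (1 : ℝ)) - f p.1‖} := by
    ext p; simp [BadSet, imp_iff_not_or]
  rw [this]
  refine (h1 hK).compl.union (measurableSet_lt ?_ ?_)
  · exact (measurable_snd.abs).const_mul _
  · exact ((hf.comp h1).sub (hf.comp measurable_fst)).norm

lemma qLip_refine {f : EuclideanSpace ℝ (Fin n) → EuclideanSpace ℝ (Fin m)} {s : Finset (Fin n)}
    {i : Fin n} {K : Set (EuclideanSpace ℝ (Fin n))} (h : QLip f s K) (k N : ℕ) :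
    QLip f (insert i s) (Refine f i K k N) := by
  obtain ⟨C, δ, hC, hδ, hQ⟩ := h
  refine ⟨4 * k + 2 * C, min (δ / 2) (1 / ((N : ℝ) + 1) / 2), by positivity,
    lt_min (by positivity) (by positivity), ?_⟩
  intro x hx y hy hxy hd
  rcases (norm_nonneg (x - y)).eq_or_lt with h0 | h0
  · have : x = y := sub_eq_zero.1 (norm_eq_zero.1 h0.symm)
    simp [this]
  set r := ‖x - y‖ with hr
  obtain ⟨hd1, hd2⟩ := lt_min_iff.1 hd
  obtain ⟨q, hq1, hq2⟩ := exists_rat_btwn (show r < 2 * r by linarith)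
  have hq0 : (0 : ℝ) < q := h0.trans hq1
  have hq0' : 0 < q := by exact_mod_cast hq0
  have bx := hx.2 q hq0' (by linarith)
  have hby := hy.2 q hq0' (by linarith)
  set e : EuclideanSpace ℝ (Fin n) := EuclideanSpace.single i (1 : ℝ) with he
  set d : ℝ := x i - y i with hdd
  have hdr : |d| ≤ r := by
    have := PiLp.norm_apply_le (x - y) i
    simpa [hdd] using this
  obtain ⟨t, ht, htx, hty⟩ : ∃ t ∈ ball (0 : ℝ) q ∩ (fun t => t + d) ⁻¹' (ball 0 q),
      (x, t) ∉ BadSet f i K k ∧ (y, t + d) ∉ BadSet f i K k := by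
    by_contra hcon
    push Not at hcon
    have hsub : ball (-(d / 2)) (q - r / 2) ⊆
        ({t : ℝ | (x, t) ∈ BadSet f i K k} ∩ ball 0 (q : ℝ)) ∪
        (fun t => t + d) ⁻¹' ({t : ℝ | (y, t) ∈ BadSet f i K k} ∩ ball 0 (q : ℝ)) := by
      intro t ht
      rw [Real.ball_eq_Ioo] at ht
      have hd' := abs_le.1 hdr
      have h1 : t ∈ ball (0 : ℝ) q := by
        rw [Real.ball_eq_Ioo]; constructor <;> linarith [ht.1, ht.2, hd'.1, hd'.2]
      have h2 : t + d ∈ ball (0 : ℝ) q := by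
        rw [Real.ball_eq_Ioo]; constructor <;> linarith [ht.1, ht.2, hd'.1, hd'.2]
      by_cases hb : (x, t) ∈ BadSet f i K k
      · exact Or.inl ⟨hb, h1⟩
      · exact Or.inr ⟨hcon t ⟨h1, h2⟩ hb, h2⟩
    have h1 := (measure_mono hsub).trans (measure_union_le (μ := (volume : Measure ℝ)) _ _)
    rw [measure_preimage_add_right, Real.volume_ball] at h1
    have h2 := h1.trans (add_le_add bx hby)
    rw [← ENNReal.ofReal_add (by positivity) (by positivity),
      ENNReal.ofReal_le_ofReal_iff (by positivity)] at h2
    norm_num at h2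
    linarith
  simp only [BadSet, mem_setOf_eq, not_forall, not_lt, ← he] at htx hty
  obtain ⟨hx'K, hx'⟩ := htx
  obtain ⟨hy'K, hy'⟩ := hty
  have ht1 : |t| ≤ 2 * r := by
    have : |t| < q := by simpa using ht.1
    linarith
  have ht2 : |t + d| ≤ 2 * r := by
    have : |t + d| < q := by
      have h := mem_ball.1 ht.2
      rwa [Real.dist_eq, sub_zero] at h
    linarith
  have hdiff : (x + t • e) - (y + (t + d) • e) = (x - y) - d • e := by
    rw [add_smul]; abel
  have hnorm : ‖(x + t • e) - (y + (t + d) • e)‖ ≤ 2 * r := by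
    rw [hdiff]
    refine (norm_sub_le _ _).trans ?_
    have : ‖d • e‖ = |d| := by simp [norm_smul, he]
    linarith
  have hmid := hQ _ hx'K _ hy'K (by
    intro l hl
    by_cases hli : l = i
    · subst hli; simp [he, hdd]; ring
    · have := hxy l (by simp [hli, hl])
      simp [he, hli, this]) (by linarith)
  have hk : (0 : ℝ) ≤ k := by positivity
  calc ‖f x - f y‖ = ‖-(f (x + t • e) - f x) + (f (x + t • e) - f (y + (t + d) • e))
        + (f (y + (t + d) • e) - f y)‖ := by congr 1; abel
    _ ≤ ‖f (x + t • e) - f x‖ + ‖f (x + t • e) - f (y + (t + d) • e)‖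
        + ‖f (y + (t + d) • e) - f y‖ := by
          refine (norm_add₃_le).trans ?_
          rw [norm_neg]
    _ ≤ k * |t| + C * ‖(x + t • e) - (y + (t + d) • e)‖ + k * |t + d| := by gcongr
    _ ≤ k * (2 * r) + C * (2 * r) + k * (2 * r) := by gcongr
    _ = (4 * k + 2 * C) * r := by ring

lemma ae_refine {E : Set (EuclideanSpace ℝ (Fin n))}
    {f : EuclideanSpace ℝ (Fin n) → EuclideanSpace ℝ (Fin m)} {i : Fin n}
    (hp : ∀ᵐ x ∂volume, x ∈ E →
      ∃ v : EuclideanSpace ℝ (Fin m), HasApproxPartialDerivAt E f i x v)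
    {K : Set (EuclideanSpace ℝ (Fin n))} (hK : MeasurableSet K) (hKE : K ⊆ E) :
    ∀ᵐ x ∂volume, x ∈ K → ∃ k N, x ∈ Refine f i K k N := by
  filter_upwards [hp, ae_line_density i hK] with x h1 h2 hxK
  obtain ⟨v, hv⟩ := h1 (hKE hxK)
  obtain ⟨k, hk⟩ := exists_nat_ge (‖v‖ + 1)
  have h3 : HasDensityAt (volume : Measure ℝ) {t : ℝ | (x, t) ∈ BadSet f i K k} 0 0 := by
    refine ((h2 hxK).union' (hv 1 one_pos)).mono' one_pos ?_
    intro t ht _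
    by_cases htK : x + t • EuclideanSpace.single i (1 : ℝ) ∈ K
    · right
      refine ⟨hKE htK, ?_⟩
      have h4 : (k : ℝ) * |t| < _ := ht htK
      have h5 := norm_sub_norm_le (f (x + t • EuclideanSpace.single i (1 : ℝ)) - f x) (t • v)
      rw [norm_smul, Real.norm_eq_abs] at h5
      have h6 := mul_le_mul_of_nonneg_right hk (abs_nonneg t)
      simp only at h4
      nlinarith
    · left; exact htK
  obtain ⟨N, hN⟩ := (density_crit _).1 h3 3
  exact ⟨k, N, hxK, hN⟩

lemma exists_cover {E : Set (EuclideanSpace ℝ (Fin n))} (hE : MeasurableSet E)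
    {f : EuclideanSpace ℝ (Fin n) → EuclideanSpace ℝ (Fin m)} (hf : Measurable f)
    (hp : ∀ i : Fin n, ∀ᵐ x ∂volume, x ∈ E →
      ∃ v : EuclideanSpace ℝ (Fin m), HasApproxPartialDerivAt E f i x v) (s : Finset (Fin n)) :
    ∃ F : Set (Set (EuclideanSpace ℝ (Fin n))), F.Countable ∧
      (∀ K ∈ F, MeasurableSet K ∧ K ⊆ E ∧ QLip f s K) ∧
      ∀ᵐ x ∂volume, x ∈ E → ∃ K ∈ F, x ∈ K := by
  induction s using Finset.induction_on with
  | empty =>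
    refine ⟨{E}, countable_singleton _, ?_, by simp⟩
    rintro K rfl
    refine ⟨hE, subset_rfl, 0, 1, le_rfl, one_pos, ?_⟩
    intro x _ y _ hxy _
    have : x = y := by ext i; exact hxy i (by simp)
    simp [this]
  | insert i s _ ih =>
    obtain ⟨F, hF, hF1, hF2⟩ := ih
    refine ⟨⋃ K ∈ F, range fun p : ℕ × ℕ => Refine f i K p.1 p.2,
      hF.biUnion fun K _ => countable_range _, ?_, ?_⟩
    · intro K' hK'
      simp only [mem_iUnion, mem_range] at hK'
      obtain ⟨K, hK, p, rfl⟩ := hK'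
      obtain ⟨a, b, c⟩ := hF1 K hK
      exact ⟨a.inter (measurableSet_dens _ (measurableSet_badSet hf i a _) _ _),
        inter_subset_left.trans b, qLip_refine c _ _⟩
    · have : ∀ᵐ x ∂volume, ∀ K ∈ F, x ∈ K → ∃ k N, x ∈ Refine f i K k N :=
        (ae_ball_iff hF).2 fun K hK => ae_refine (hp i) (hF1 K hK).1 (hF1 K hK).2.1
      filter_upwards [this, hF2] with x h1 h2 hxE
      obtain ⟨K, hK, hxK⟩ := h2 hxE
      obtain ⟨k, N, h⟩ := h1 K hK hxK
      refine ⟨_, ?_, h⟩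
      simp only [mem_iUnion, mem_range]
      exact ⟨K, hK, (k, N), rfl⟩

/-- The conclusion at a point. -/
def Concl (E : Set (EuclideanSpace ℝ (Fin n)))
    (f : EuclideanSpace ℝ (Fin n) → EuclideanSpace ℝ (Fin m))
    (x : EuclideanSpace ℝ (Fin n)) : Prop :=
  ∃ L : EuclideanSpace ℝ (Fin n) →ₗ[ℝ] EuclideanSpace ℝ (Fin m),
        IsApproxDifferential E f x L ∧
        ∀ j : Fin n, HasApproxPartialDerivAt E f j x (L (EuclideanSpace.single j (1 : ℝ)))

lemma concl_of_lipschitzOn (E : Set (EuclideanSpace ℝ (Fin n)))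
    {f : EuclideanSpace ℝ (Fin n) → EuclideanSpace ℝ (Fin m)}
    {K : Set (EuclideanSpace ℝ (Fin n))} (hK : MeasurableSet K) {C : ℝ≥0}
    (hL : LipschitzOnWith C f K) : ∀ᵐ x ∂volume, x ∈ K → Concl E f x := by
  obtain ⟨g, hg, hfg⟩ := hL.extend_finite_dimension
  filter_upwards [hg.ae_differentiableAt (μ := volume), ae_density_compl volume hK,
    ae_all_iff.2 fun i => ae_line_density i hK] with x h1 h2 h3 hxK
  have hbound : ∀ ε > 0, ∃ δ > 0, ∀ y ∈ K, dist y x < δ →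
      ‖f y - f x - fderiv ℝ g x (y - x)‖ ≤ ε * ‖y - x‖ := by
    intro ε hε
    have := h1.hasFDerivAt.isLittleO.def hε
    obtain ⟨δ, hδ, h⟩ := Metric.eventually_nhds_iff.1 this
    refine ⟨δ, hδ, fun y hy hyx => ?_⟩
    rw [hfg hy, hfg hxK]
    exact h hyx
  refine ⟨(fderiv ℝ g x).toLinearMap, ?_, ?_⟩
  · intro ε hε
    obtain ⟨δ, hδ, h⟩ := hbound ε hε
    refine (h2 hxK).mono' hδ ?_
    rintro y ⟨_, hy⟩ hyx hyK
    exact absurd hy (not_lt.2 (h y hyK hyx))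
  · intro j ε hε
    obtain ⟨δ, hδ, h⟩ := hbound ε hε
    refine (h3 j hxK).mono' hδ ?_
    rintro t ⟨_, ht⟩ htx htK
    have h4 := h _ htK (by simpa [dist_eq_norm, norm_smul] using htx)
    rw [add_sub_cancel_left, map_smul, norm_smul] at h4
    simp only [EuclideanSpace.norm_single, norm_one, mul_one, Real.norm_eq_abs] at h4
    exact absurd ht (not_lt.2 h4)

lemma core {E : Set (EuclideanSpace ℝ (Fin n))} (hE : MeasurableSet E)
    {f : EuclideanSpace ℝ (Fin n) → EuclideanSpace ℝ (Fin m)} (hf : Measurable f)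
    (hp : ∀ i : Fin n, ∀ᵐ x ∂volume, x ∈ E →
      ∃ v : EuclideanSpace ℝ (Fin m), HasApproxPartialDerivAt E f i x v) :
    ∀ᵐ x ∂volume, x ∈ E → Concl E f x := by
  obtain ⟨F, hF, hF1, hF2⟩ := exists_cover hE hf hp Finset.univ
  have : ∀ᵐ x ∂volume, ∀ K ∈ F, x ∈ K → Concl E f x := by
    refine (ae_ball_iff hF).2 fun K hK => ?_
    obtain ⟨hKm, -, C, δ, hC, hδ, hQ⟩ := hF1 K hK
    have h1 : ∀ l : ℕ, ∀ᵐ x ∂volume,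
        x ∈ K ∩ ball (TopologicalSpace.denseSeq (EuclideanSpace ℝ (Fin n)) l) (δ / 2) →
        Concl E f x := by
      intro l
      refine concl_of_lipschitzOn E (hKm.inter measurableSet_ball) (C := ⟨C, hC⟩)
        (LipschitzOnWith.of_dist_le_mul fun x hx y hy => ?_)
      rw [dist_eq_norm, dist_eq_norm]
      refine hQ x hx.1 y hy.1 (by simp) ?_
      rw [← dist_eq_norm]
      have a := mem_ball.1 hx.2
      have b := mem_ball'.1 hy.2
      linarith [dist_triangle x (TopologicalSpace.denseSeq (EuclideanSpace ℝ (Fin n)) l) y]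
    filter_upwards [ae_all_iff.2 h1] with x hx hxK
    obtain ⟨l, hl⟩ := (TopologicalSpace.denseRange_denseSeq
      (EuclideanSpace ℝ (Fin n))).exists_dist_lt x (half_pos hδ)
    exact hx l ⟨hxK, hl⟩
  filter_upwards [this, hF2] with x h1 h2 hxE
  obtain ⟨K, hK, hxK⟩ := h2 hxE
  exact h1 K hK hxK

lemma partial_congr {E : Set (EuclideanSpace ℝ (Fin n))}
    {f g : EuclideanSpace ℝ (Fin n) → EuclideanSpace ℝ (Fin m)} (h : EqOn f g E)
    {x : EuclideanSpace ℝ (Fin n)} (hx : x ∈ E) {j : Fin n} {v : EuclideanSpace ℝ (Fin m)}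
    (hf : HasApproxPartialDerivAt E f j x v) : HasApproxPartialDerivAt E g j x v := by
  intro ε hε
  refine (hf ε hε).mono' one_pos ?_
  rintro t ⟨h1, h2⟩ _
  refine ⟨h1, ?_⟩
  rwa [h h1, h hx]

lemma differential_congr {E : Set (EuclideanSpace ℝ (Fin n))}
    {f g : EuclideanSpace ℝ (Fin n) → EuclideanSpace ℝ (Fin m)} (h : EqOn f g E)
    {x : EuclideanSpace ℝ (Fin n)} (hx : x ∈ E)
    {L : EuclideanSpace ℝ (Fin n) →ₗ[ℝ] EuclideanSpace ℝ (Fin m)}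
    (hf : IsApproxDifferential E f x L) : IsApproxDifferential E g x L := by
  intro ε hε
  refine (hf ε hε).mono' one_pos ?_
  rintro t ⟨h1, h2⟩ _
  refine ⟨h1, ?_⟩
  rwa [h h1, h hx]

end helpers

/-- A measurable mapping having approximate partial derivatives along each coordinate
direction almost everywhere is approximately differentiable almost everywhere, and the
approximate differential acts on the coordinate vectors as the corresponding approximate
partial derivatives. -/
theorem approx_differentiable_of_approx_partials {n m : ℕ}
    (E : Set (EuclideanSpace ℝ (Fin n))) (hE : MeasurableSet E)
    (f : EuclideanSpace ℝ (Fin n) → EuclideanSpace ℝ (Fin m))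
    (hf : Measurable (fun x : E => f x))
    (hpartial : ∀ j : Fin n, ∀ᵐ x ∂volume, x ∈ E →
      ∃ v : EuclideanSpace ℝ (Fin m), HasApproxPartialDerivAt E f j x v) :
    ∀ᵐ x ∂volume, x ∈ E →
      ∃ L : EuclideanSpace ℝ (Fin n) →ₗ[ℝ] EuclideanSpace ℝ (Fin m),
        IsApproxDifferential E f x L ∧
        ∀ j : Fin n, HasApproxPartialDerivAt E f j x (L (EuclideanSpace.single j (1 : ℝ))) := by
  classical
  have hg : Measurable (E.indicator f) := by
    refine measurable_of_restrict_of_restrict_compl hE ?_ ?_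
    · convert hf using 1
      ext1 x
      simp
    · have : Eᶜ.domRestrict (E.indicator f) = fun _ => 0 := by
        ext1 x
        exact indicator_of_notMem x.2 f
      rw [this]
      exact measurable_const
  have hfg : EqOn f (E.indicator f) E := fun x hx => (indicator_of_mem hx f).symm
  have := core hE hg fun i => by
    filter_upwards [hpartial i] with x hx hxE
    obtain ⟨v, hv⟩ := hx hxE
    exact ⟨v, partial_congr hfg hxE hv⟩
  filter_upwards [this] with x hx hxE
  obtain ⟨L, h1, h2⟩ := hx hxE
  exact ⟨L, differential_congr hfg.symm hxE h1, fun j => partial_congr hfg.symm hxE (h2 j)⟩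
end

section
/- Let E ⊆ ℝ^n be a Lebesgue-measurable set, f : E → ℝ^m a measurable mapping, and fix j ∈ {1, …, n}. Then: (a) the set A_j = {x ∈ E : ap limsup_{t→0} |f(x + t e_j) − f(x)|/|t| < ∞} is Lebesgue measurable; (b) f has an approximate partial derivative ap ∂_j f(x) along e_j at almost every point x ∈ A_j; and (c) the mapping x ↦ ap ∂_j f(x) is measurable on its domain of definition. -/
open MeasureTheory Metric Filter Set Function
open scoped Topology ENNReal NNReal

/-- The set `A_j` of points of `E` where the approximate upper limit of the difference
quotient of `f` along the `j`-th coordinate direction is finite. -/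
def finiteApDilatationSet {n m : ℕ} (E : Set (EuclideanSpace ℝ (Fin n)))
    (f : EuclideanSpace ℝ (Fin n) → EuclideanSpace ℝ (Fin m)) (j : Fin n) :
    Set (EuclideanSpace ℝ (Fin n)) :=
  {x ∈ E | ∃ s : ℝ, HasDensityAt (volume : Measure ℝ)
    {t : ℝ | x + t • EuclideanSpace.single j (1 : ℝ) ∈ E ∧
      s < ‖f (x + t • EuclideanSpace.single j (1 : ℝ)) - f x‖ / |t|} 0 0}

/-- The domain of definition of the approximate partial derivative `ap ∂_j f`. -/
def apPartialDerivDomain {n m : ℕ} (E : Set (EuclideanSpace ℝ (Fin n)))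
    (f : EuclideanSpace ℝ (Fin n) → EuclideanSpace ℝ (Fin m)) (j : Fin n) :
    Set (EuclideanSpace ℝ (Fin n)) :=
  {x | ∃ v : EuclideanSpace ℝ (Fin m), HasApproxPartialDerivAt E f j x v}

lemma zd_iff (Y : Set ℝ) : HasDensityAt (volume : Measure ℝ) Y 0 0 ↔
    ∀ δ : ℝ, 0 < δ → ∃ R : ℝ, 0 < R ∧ ∀ r, 0 < r → r < R →
      volume (Y ∩ ball 0 r) ≤ ENNReal.ofReal (δ * r) := by
  unfold HasDensityAt
  rw [ENNReal.tendsto_nhds_zero]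
  have key : ∀ (η : ℝ≥0∞) (r : ℝ), 0 < r →
      (volume (Y ∩ ball 0 r) / volume (ball (0:ℝ) r) ≤ η ↔
        volume (Y ∩ ball 0 r) ≤ η * ENNReal.ofReal (2 * r)) := by
    intro η r hr
    rw [Real.volume_ball, ENNReal.div_le_iff]
    · simpa using hr
    · exact ENNReal.ofReal_ne_top
  constructor
  · intro h δ hδ
    have h1 := h (ENNReal.ofReal (δ / 2)) (by simpa using hδ)
    obtain ⟨R, hR, h2⟩ := mem_nhdsGT_iff_exists_Ioo_subset.1 h1
    refine ⟨R, hR, fun r hr hrR => ?_⟩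
    have h3 := (key _ r hr).1 (h2 ⟨hr, hrR⟩)
    rw [← ENNReal.ofReal_mul (by positivity)] at h3
    convert h3 using 2
    ring
  · intro h η hη
    obtain ⟨d, hd0, hd⟩ : ∃ d : ℝ, 0 < d ∧ ENNReal.ofReal d ≤ η := by
      by_cases ht : η = ⊤
      · exact ⟨1, one_pos, by simp [ht]⟩
      · exact ⟨η.toReal, ENNReal.toReal_pos hη.ne' ht, by rw [ENNReal.ofReal_toReal ht]⟩
    obtain ⟨R, hR, h2⟩ := h d hd0
    refine mem_nhdsGT_iff_exists_Ioo_subset.2 ⟨R, hR, fun r hr => ?_⟩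
    refine (key _ r hr.1).2 ((h2 r hr.1 hr.2).trans ?_)
    refine le_trans ?_ (mul_le_mul_left hd _)
    rw [← ENNReal.ofReal_mul hd0.le]
    apply ENNReal.ofReal_le_ofReal
    have := mul_pos hd0 hr.1
    linarith

lemma zd_mono {Y Y' : Set ℝ} (R : ℝ) (hR : 0 < R)
    (h : ∀ t, t ≠ 0 → |t| < R → t ∈ Y → t ∈ Y')
    (hY : HasDensityAt (volume : Measure ℝ) Y' 0 0) :
    HasDensityAt (volume : Measure ℝ) Y 0 0 := by
  rw [zd_iff] at hY ⊢
  intro δ hδ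
  obtain ⟨R', hR', h2⟩ := hY δ hδ
  refine ⟨min R R', lt_min hR hR', fun r hr hrR => ?_⟩
  refine le_trans ?_ (h2 r hr (hrR.trans_le (min_le_right _ _)))
  have : Y ∩ ball 0 r ⊆ (Y' ∩ ball 0 r) ∪ {0} := by
    rintro t ⟨h1, h3⟩
    by_cases ht : t = 0
    · exact Or.inr ht
    · refine Or.inl ⟨h t ht ?_ h1, h3⟩
      have : |t| < r := by simpa using h3
      exact this.trans (hrR.trans_le (min_le_left _ _))
  refine (measure_mono this).trans ((measure_union_le _ _).trans ?_)
  simp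

lemma zd_mono' {Y Y' : Set ℝ} (h : ∀ t, t ≠ 0 → t ∈ Y → t ∈ Y')
    (hY : HasDensityAt (volume : Measure ℝ) Y' 0 0) :
    HasDensityAt (volume : Measure ℝ) Y 0 0 :=
  zd_mono 1 one_pos (fun t ht _ => h t ht) hY

lemma zd_union {Y Y' : Set ℝ} (hY : HasDensityAt (volume : Measure ℝ) Y 0 0)
    (hY' : HasDensityAt (volume : Measure ℝ) Y' 0 0) :
    HasDensityAt (volume : Measure ℝ) (Y ∪ Y') 0 0 := by
  rw [zd_iff] at *
  intro δ hδ
  obtain ⟨R, hR, h⟩ := hY (δ/2) (by positivity)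
  obtain ⟨R', hR', h'⟩ := hY' (δ/2) (by positivity)
  refine ⟨min R R', lt_min hR hR', fun r hr hrR => ?_⟩
  rw [union_inter_distrib_right]
  refine (measure_union_le _ _).trans ?_
  refine (add_le_add (h r hr (hrR.trans_le (min_le_left _ _)))
    (h' r hr (hrR.trans_le (min_le_right _ _)))).trans ?_
  rw [← ENNReal.ofReal_add (by positivity) (by positivity)]
  apply ENNReal.ofReal_le_ofReal
  linarith

lemma zd_iff_rat (Y : Set ℝ) : HasDensityAt (volume : Measure ℝ) Y 0 0 ↔
    ∀ k : ℕ, ∃ N : ℕ, ∀ q : ℚ, 0 < q → (q:ℝ) < 1 / ((N:ℝ) + 1) →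
      volume (Y ∩ ball 0 (q:ℝ)) ≤ ENNReal.ofReal (1 / ((k:ℝ) + 1) * q) := by
  rw [zd_iff]
  constructor
  · intro h k
    obtain ⟨R, hR, h⟩ := h (1 / ((k:ℝ) + 1)) (by positivity)
    obtain ⟨N, hN⟩ := exists_nat_one_div_lt hR
    exact ⟨N, fun q hq hqN => h q (by exact_mod_cast hq) (hqN.trans hN)⟩
  · intro h δ hδ
    obtain ⟨k, hk⟩ := exists_nat_one_div_lt (half_pos hδ)
    obtain ⟨N, hN⟩ := h k
    refine ⟨1 / ((N:ℝ) + 1), by positivity, fun r hr hrR => ?_⟩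
    obtain ⟨q, hq1, hq2⟩ := exists_rat_btwn (lt_min (by linarith : r < 2 * r) hrR)
    have hq0 : (0:ℝ) < q := hr.trans hq1
    refine (measure_mono (inter_subset_inter_right _ (ball_subset_ball hq1.le))).trans
      ((hN q (by exact_mod_cast hq0) (hq2.trans_le (min_le_right _ _))).trans ?_)
    apply ENNReal.ofReal_le_ofReal
    have := hq2.trans_le (min_le_left _ _)
    calc 1 / ((k:ℝ) + 1) * q ≤ δ / 2 * (2 * r) := by gcongr
      _ = δ * r := by ring

lemma measurableSet_zd {X : Type*} [MeasurableSpace X] {P : Set (X × ℝ)}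
    (hP : MeasurableSet P) :
    MeasurableSet {x | HasDensityAt (volume : Measure ℝ) {t | (x, t) ∈ P} 0 0} := by
  simp only [zd_iff_rat, ofPred_forall, ofPred_exists]
  refine MeasurableSet.iInter fun k => MeasurableSet.iUnion fun N => MeasurableSet.iInter fun q =>
    MeasurableSet.iInter fun _ => MeasurableSet.iInter fun _ => ?_
  refine measurableSet_le ?_ measurable_const
  have : MeasurableSet (P ∩ (univ ×ˢ ball (0:ℝ) q)) :=
    hP.inter (MeasurableSet.univ.prod measurableSet_ball)
  convert measurable_measure_prodMk_left (ν := (volume : Measure ℝ)) this using 3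
  ext t; simp

lemma measurable_aplim {Y : Type*} [MeasurableSpace Y] {Q : Set (Y × ℝ)} (hQ : MeasurableSet Q)
    {u : Y × ℝ → ℝ} (hu : Measurable u) (w : Y → ℝ)
    (h0 : ∀ y, HasDensityAt (volume : Measure ℝ) {t | (y, t) ∈ Q} 0 0 → w y = 0)
    (h : ∀ y, ∀ ε : ℝ, 0 < ε → HasDensityAt (volume : Measure ℝ)
      {t | (y, t) ∈ Q ∧ ε < |u (y, t) - w y|} 0 0) : Measurable w := by
  refine measurable_of_Iic fun a => ?_
  have : w ⁻¹' Iic a = ({y | HasDensityAt (volume : Measure ℝ) {t | (y, t) ∈ Q} 0 0} ∩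
      {y | 0 ≤ a}) ∪ ({y | HasDensityAt (volume : Measure ℝ) {t | (y, t) ∈ Q} 0 0}ᶜ ∩
      ⋂ k : ℕ, {y | HasDensityAt (volume : Measure ℝ)
      {t | (y, t) ∈ Q ∩ {p | a + 1 / ((k:ℝ) + 1) < u p}} 0 0}) := by
    ext y
    by_cases hy : HasDensityAt (volume : Measure ℝ) {t | (y, t) ∈ Q} 0 0
    · simp [hy, h0 y hy]
    simp only [mem_preimage, mem_Iic, mem_iInter, mem_ofPred_eq, mem_inter_iff, mem_union,
      mem_compl_iff, hy, false_and, false_or, not_false_eq_true, true_and]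
    constructor
    · intro hw k
      refine zd_mono' ?_ (h y (1 / ((k:ℝ) + 1)) (by positivity))
      rintro t - ⟨h1, h2⟩
      refine ⟨h1, lt_of_lt_of_le ?_ (le_abs_self _)⟩
      linarith
    · intro hk
      by_contra! hw
      obtain ⟨k, hk1⟩ := exists_nat_one_div_lt (half_pos (sub_pos.2 hw))
      refine hy (zd_mono' ?_ (zd_union (hk k) (h y ((w y - a) / 2) (half_pos (sub_pos.2 hw)))))
      rintro t - h1
      simp only [mem_ofPred_eq] at h1
      by_cases h2 : a + 1 / ((k:ℝ) + 1) < u (y, t)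
      · exact Or.inl ⟨h1, h2⟩
      · refine Or.inr ⟨h1, ?_⟩
        push Not at h2
        rw [abs_sub_comm]
        refine lt_of_lt_of_le ?_ (le_abs_self _)
        linarith
  rw [this]
  exact ((measurableSet_zd hQ).inter (MeasurableSet.const _)).union
    ((measurableSet_zd hQ).compl.inter (MeasurableSet.iInter fun k =>
    measurableSet_zd (hQ.inter (measurableSet_lt measurable_const hu))))

lemma zd_null {Y : Set ℝ} (h : volume Y = 0) : HasDensityAt (volume : Measure ℝ) Y 0 0 := by
  rw [zd_iff]
  intro δ hδ
  refine ⟨1, one_pos, fun r hr _ => ?_⟩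
  rw [measure_mono_null inter_subset_left h]
  exact zero_le

lemma ae_zd_compl {T : Set ℝ} (hT : MeasurableSet T) :
    ∀ᵐ x : ℝ, x ∈ T → HasDensityAt (volume : Measure ℝ) {t | x + t ∉ T} 0 0 := by
  filter_upwards [Besicovitch.ae_tendsto_measure_inter_div_of_measurableSet
    (volume : Measure ℝ) hT.compl] with x hx hxT
  rw [indicator_of_notMem (by simpa using hxT)] at hx
  refine tendsto_of_tendsto_of_tendsto_of_le_of_le' tendsto_const_nhds hx
    (Eventually.of_forall fun _ => zero_le) ?_
  filter_upwards [self_mem_nhdsWithin] with r hr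
  rw [Real.volume_ball, Real.volume_closedBall]
  gcongr ?_ / _
  rw [← measure_preimage_add volume x (Tᶜ ∩ closedBall x r)]
  apply measure_mono
  rintro t ⟨h1, h2⟩
  refine ⟨h1, ?_⟩
  simp at h2 ⊢
  exact h2.le

lemma ae_zd_of_disjoint (s : Set ℝ) :
    ∀ᵐ x : ℝ, x ∈ s → ∀ B : Set ℝ, MeasurableSet B →
      (∃ R : ℝ, 0 < R ∧ ∀ t, |t| < R → t ∈ B → x + t ∉ s) →
      HasDensityAt (volume : Measure ℝ) B 0 0 := by
  filter_upwards [ae_zd_compl (measurableSet_toMeasurable volume s)] with x hx hxs B hB h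
  obtain ⟨R, hR, h⟩ := h
  have h1 := hx (subset_toMeasurable _ _ hxs)
  have h2 : volume ((fun t => x + t) ⁻¹' (toMeasurable volume s ∩
      ((fun y => -x + y) ⁻¹' (B ∩ ball 0 R)))) = 0 := by
    rw [measure_preimage_add, Measure.measure_toMeasurable_inter_of_sFinite]
    · convert measure_empty (μ := (volume : Measure ℝ))
      ext y
      simp only [mem_inter_iff, mem_preimage, mem_empty_iff_false, iff_false]
      rintro ⟨hy, h3, h4⟩
      refine h _ (by simpa using h4) h3 ?_
      simpa using hy
    · exact (hB.inter measurableSet_ball).preimage (measurable_const_add _)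
  refine zd_mono R hR ?_ (zd_union h1 (zd_null h2))
  intro t _ htR htB
  by_cases ht : x + t ∈ toMeasurable volume s
  · refine Or.inr ⟨ht, ?_⟩
    simp [htB, htR]
  · exact Or.inl ht

lemma lip_piece {V : Type*} [NormedAddCommGroup V] {S : Set ℝ} {F : ℝ → V} {K R : ℝ}
    {x y : ℝ} (hxy : x < y) (hR : y - x < R)
    (hx : ∀ r, 0 < r → r < R → volume ({t | x + t ∈ S ∧ K * |t| < ‖F (x + t) - F x‖} ∩ ball 0 r)
      ≤ ENNReal.ofReal (1 / 4 * r))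
    (hx' : ∀ r, 0 < r → r < R → volume ({t | x + t ∉ S} ∩ ball 0 r)
      ≤ ENNReal.ofReal (1 / 4 * r))
    (hy : ∀ r, 0 < r → r < R → volume ({t | y + t ∈ S ∧ K * |t| < ‖F (y + t) - F y‖} ∩ ball 0 r)
      ≤ ENNReal.ofReal (1 / 4 * r)) :
    ‖F x - F y‖ ≤ K * (y - x) := by
  have hd : 0 < y - x := by linarith
  by_contra! hcon
  set d := y - x with hdd
  have hsub : Ioo 0 d ⊆ (({t | x + t ∈ S ∧ K * |t| < ‖F (x + t) - F x‖} ∩ ball 0 d) ∪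
      ({t | x + t ∉ S} ∩ ball 0 d)) ∪
      ((fun t => -d + t) ⁻¹' ({t | y + t ∈ S ∧ K * |t| < ‖F (y + t) - F y‖} ∩ ball 0 d)) := by
    rintro t ⟨ht0, htd⟩
    have hb : t ∈ ball (0:ℝ) d := by simp [abs_of_pos ht0, htd]
    by_cases hS : x + t ∈ S
    swap
    · exact Or.inl (Or.inr ⟨hS, hb⟩)
    by_cases hK : K * |t| < ‖F (x + t) - F x‖
    · exact Or.inl (Or.inl ⟨⟨hS, hK⟩, hb⟩)
    refine Or.inr ?_
    have e : y + (-d + t) = x + t := by rw [hdd]; ring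
    have ab : |-d + t| = d - t := by rw [abs_of_neg (by linarith)]; ring
    refine ⟨⟨by rw [e]; exact hS, ?_⟩, by simp only [mem_ball, dist_zero_right, Real.norm_eq_abs, ab]; linarith⟩
    rw [e, ab]
    rw [abs_of_pos ht0] at hK
    push Not at hK
    have := norm_sub_le_norm_sub_add_norm_sub (F x) (F (x + t)) (F y)
    rw [norm_sub_rev (F x) (F (x + t))] at this
    linarith
  have h1 := (measure_mono (μ := (volume : Measure ℝ)) hsub).trans ((measure_union_le _ _).trans
    (add_le_add_left (measure_union_le _ _) _))
  rw [measure_preimage_add, Real.volume_Ioo] at h1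
  have h2 := h1.trans (add_le_add (add_le_add (hx d hd hR) (hx' d hd hR)) (hy d hd hR))
  rw [← ENNReal.ofReal_add (by positivity) (by positivity),
    ← ENNReal.ofReal_add (by positivity) (by positivity), ENNReal.ofReal_le_ofReal_iff (by positivity)] at h2
  linarith

lemma one_dim {m : ℕ} {S : Set ℝ} (hS : MeasurableSet S) {F : ℝ → EuclideanSpace ℝ (Fin m)}
    (hF : Measurable F) :
    ∀ᵐ x : ℝ, x ∈ S → (∃ s : ℝ, HasDensityAt (volume : Measure ℝ)
      {t | x + t ∈ S ∧ s < ‖F (x + t) - F x‖ / |t|} 0 0) →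
      ∃ v, ∀ ε : ℝ, 0 < ε → HasDensityAt (volume : Measure ℝ)
      {t | x + t ∈ S ∧ ε * |t| < ‖F (x + t) - F x - t • v‖} 0 0 := by
  let A : ℕ → ℚ → Set ℝ := fun k a => {x | x ∈ S ∧ |x - a| < 1 / ((k:ℝ) + 1) / 2 ∧
    (∀ r, 0 < r → r < 1 / ((k:ℝ) + 1) →
      volume ({t | x + t ∈ S ∧ k * |t| < ‖F (x + t) - F x‖} ∩ ball 0 r)
      ≤ ENNReal.ofReal (1 / 4 * r)) ∧
    (∀ r, 0 < r → r < 1 / ((k:ℝ) + 1) → volume ({t | x + t ∉ S} ∩ ball 0 r)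
      ≤ ENNReal.ofReal (1 / 4 * r))}
  have hlip : ∀ (k : ℕ) (a : ℚ), LipschitzOnWith (k : ℝ≥0) F (A k a) := by
    intro k a
    have key : ∀ x ∈ A k a, ∀ y ∈ A k a, x < y → ‖F x - F y‖ ≤ k * (y - x) := by
      intro x hx y hy hxy
      have h1 := abs_lt.1 hx.2.1
      have h2 := abs_lt.1 hy.2.1
      exact lip_piece hxy (by linarith) hx.2.2.1 hx.2.2.2 hy.2.2.1
    refine LipschitzOnWith.of_dist_le_mul fun x hx y hy => ?_
    rw [dist_eq_norm, dist_eq_norm, Real.norm_eq_abs, NNReal.coe_natCast]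
    rcases lt_trichotomy x y with h | h | h
    · rw [abs_of_neg (by linarith)]
      convert key x hx y hy h using 2; ring
    · simp [h]
    · rw [abs_of_pos (by linarith), norm_sub_rev]
      exact key y hy x hx h
  have hdiff := ae_all_iff.2 fun k => ae_all_iff.2 fun a => (hlip k a).ae_differentiableWithinAt_of_mem (μ := volume)
  have hdens := ae_all_iff.2 fun k => ae_all_iff.2 fun a => ae_zd_of_disjoint (A k a)
  filter_upwards [hdiff, hdens, ae_zd_compl hS] with x hx1 hx2 hx3 hxS hs
  obtain ⟨s, hs⟩ := hs
  obtain ⟨R1, hR1, h1⟩ := (zd_iff _).1 hs (1/4) (by norm_num)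
  obtain ⟨R2, hR2, h2⟩ := (zd_iff _).1 (hx3 hxS) (1/4) (by norm_num)
  obtain ⟨k1, hk1⟩ := exists_nat_ge s
  obtain ⟨k2, hk2⟩ := exists_nat_one_div_lt (lt_min hR1 hR2)
  let k := max k1 k2
  have hks : s ≤ k := hk1.trans (by exact_mod_cast le_max_left _ _)
  have hkR : 1 / ((k:ℝ) + 1) < min R1 R2 := by
    refine lt_of_le_of_lt ?_ hk2
    have : (k2:ℝ) ≤ k := by exact_mod_cast le_max_right _ _
    gcongr
  have hk0 : 0 < 1 / ((k:ℝ) + 1) / 2 := by positivity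
  obtain ⟨a, ha1, ha2⟩ := exists_rat_btwn (by linarith : x < x + 1 / ((k:ℝ) + 1) / 2)
  have hxA : x ∈ A k a := by
    refine ⟨hxS, ?_, ?_, ?_⟩
    · rw [abs_lt]; constructor <;> linarith
    · intro r hr hrk
      refine le_trans (measure_mono ?_) (h1 r hr (hrk.trans (hkR.trans_le (min_le_left _ _))))
      rintro t ⟨⟨ht1, ht2⟩, ht3⟩
      refine ⟨⟨ht1, ?_⟩, ht3⟩
      by_cases ht0 : t = 0
      · simp [ht0] at ht2
      · rw [lt_div_iff₀ (abs_pos.2 ht0)]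
        refine lt_of_le_of_lt ?_ ht2
        gcongr
    · intro r hr hrk
      exact h2 r hr (hrk.trans (hkR.trans_le (min_le_right _ _)))
  have hd := (hx1 k a hxA).hasDerivWithinAt
  refine ⟨derivWithin F (A k a) x, fun ε hε => ?_⟩
  refine hx2 k a hxA _ ?_ ?_
  · refine MeasurableSet.inter (s₂ := {t | ε * |t| < ‖F (x + t) - F x - t • derivWithin F (A k a) x‖})
      (hS.preimage (measurable_const_add x)) (measurableSet_lt ?_ ?_)
    · fun_prop
    · fun_prop
  · have := (hasDerivWithinAt_iff_isLittleO.1 hd).def hε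
    rw [eventually_nhdsWithin_iff, Metric.eventually_nhds_iff] at this
    obtain ⟨R, hR, h⟩ := this
    refine ⟨R, hR, fun t ht htB hA => ?_⟩
    have h3 := h (y := x + t) (by simpa using ht) hA
    simp only [add_sub_cancel_left, Real.norm_eq_abs] at h3
    exact absurd htB.2 (not_lt.2 h3)

lemma exists_deriv_iff {m : ℕ} (S : Set ℝ) (G : ℝ → EuclideanSpace ℝ (Fin m)) :
    (∃ v, ∀ ε : ℝ, 0 < ε → HasDensityAt (volume : Measure ℝ)
      {t | t ∈ S ∧ ε * |t| < ‖G t - t • v‖} 0 0) ↔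
    ∀ k : ℕ, ∃ i : ℕ, HasDensityAt (volume : Measure ℝ)
      {t | t ∈ S ∧ 1 / ((k:ℝ) + 1) * |t| <
        ‖G t - t • TopologicalSpace.denseSeq (EuclideanSpace ℝ (Fin m)) i‖} 0 0 := by
  constructor
  · rintro ⟨v, hv⟩ k
    have hk : 0 < 1 / ((k:ℝ) + 1) / 2 := by positivity
    obtain ⟨i, hi⟩ := (TopologicalSpace.denseRange_denseSeq
      (EuclideanSpace ℝ (Fin m))).exists_dist_lt v hk
    refine ⟨i, zd_mono' ?_ (hv _ hk)⟩
    rintro t ht0 ⟨h1, h2⟩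
    refine ⟨h1, ?_⟩
    set q := TopologicalSpace.denseSeq (EuclideanSpace ℝ (Fin m)) i
    have h3 : ‖G t - t • q‖ ≤ ‖G t - t • v‖ + |t| * ‖v - q‖ := by
      rw [← Real.norm_eq_abs, ← norm_smul]
      refine le_trans (le_of_eq ?_) (norm_add_le _ _)
      congr 1
      rw [smul_sub]; abel
    rw [dist_eq_norm] at hi
    have := mul_lt_mul_of_pos_left hi (abs_pos.2 ht0)
    linarith
  · intro h
    by_cases hS : HasDensityAt (volume : Measure ℝ) S 0 0
    · exact ⟨0, fun ε _ => zd_mono' (fun t _ ht => ht.1) hS⟩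
    choose i hi using h
    set q : ℕ → EuclideanSpace ℝ (Fin m) := fun k =>
      TopologicalSpace.denseSeq (EuclideanSpace ℝ (Fin m)) (i k) with hq
    have key : ∀ k l, ‖q k - q l‖ ≤ 1 / ((k:ℝ) + 1) + 1 / ((l:ℝ) + 1) := by
      intro k l
      by_contra! hc
      refine hS (zd_mono' ?_ (zd_union (hi k) (hi l)))
      intro t ht0 htS
      by_contra hcon
      simp only [mem_union, mem_ofPred_eq, not_or, not_and, not_lt] at hcon
      have h1 := hcon.1 htS
      have h2 := hcon.2 htS
      have h3 : |t| * ‖q k - q l‖ ≤ ‖G t - t • q l‖ + ‖G t - t • q k‖ := by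
        rw [← Real.norm_eq_abs, ← norm_smul]
        refine le_trans (le_of_eq ?_) (norm_sub_le _ _)
        congr 1
        rw [smul_sub]; abel
      have := mul_lt_mul_of_pos_left hc (abs_pos.2 ht0)
      simp only [hq] at *
      linarith
    have key2 : ∀ N l : ℕ, N ≤ l → 1 / ((l:ℝ) + 1) ≤ 1 / ((N:ℝ) + 1) := by
      intro N l h
      have : (N:ℝ) ≤ l := by exact_mod_cast h
      gcongr
    have hcau : CauchySeq q := by
      refine cauchySeq_of_le_tendsto_0 (fun N : ℕ => 1 / ((N:ℝ) + 1) + 1 / ((N:ℝ) + 1)) ?_ ?_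
      · intro k l N hk hl
        rw [dist_eq_norm]
        exact (key k l).trans (add_le_add (key2 _ _ hk) (key2 _ _ hl))
      · simpa using tendsto_one_div_add_atTop_nhds_zero_nat.add
          (tendsto_one_div_add_atTop_nhds_zero_nat (𝕜 := ℝ))
    obtain ⟨v, hv⟩ := cauchySeq_tendsto_of_complete hcau
    refine ⟨v, fun ε hε => ?_⟩
    obtain ⟨k, hk⟩ := exists_nat_one_div_lt (by positivity : 0 < ε / 3)
    have hkv : ‖q k - v‖ ≤ 1 / ((k:ℝ) + 1) + 1 / ((k:ℝ) + 1) := by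
      refine le_of_tendsto (tendsto_const_nhds.sub hv).norm ?_
      filter_upwards [eventually_ge_atTop k] with l hl
      exact (key k l).trans (add_le_add le_rfl (key2 _ _ hl))
    refine zd_mono' ?_ (hi k)
    rintro t ht0 ⟨h1, h2⟩
    refine ⟨h1, ?_⟩
    have h3 : ‖G t - t • v‖ ≤ ‖G t - t • q k‖ + |t| * ‖q k - v‖ := by
      rw [← Real.norm_eq_abs, ← norm_smul]
      refine le_trans (le_of_eq ?_) (norm_add_le _ _)
      congr 1
      rw [smul_sub]; abel
    have := mul_le_mul_of_nonneg_left hkv (abs_nonneg t)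
    have := mul_lt_mul_of_pos_left hk (abs_pos.2 ht0)
    simp only [hq] at *
    linarith

section
variable {n m : ℕ} {E : Set (EuclideanSpace ℝ (Fin n))}
    {f f' : EuclideanSpace ℝ (Fin n) → EuclideanSpace ℝ (Fin m)} {j : Fin n}

lemma finiteApDilatationSet_congr (h : ∀ x ∈ E, f x = f' x) :
    finiteApDilatationSet E f j = finiteApDilatationSet E f' j := by
  ext x
  refine and_congr_right fun hx => exists_congr fun s => ?_
  rw [h x hx]
  refine iff_of_eq ?_
  congr 1
  ext t
  refine and_congr_right fun ht => ?_
  rw [h _ ht]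

lemma hasApprox_congr (h : ∀ x ∈ E, f x = f' x) {x} (hx : x ∈ E) {v} :
    HasApproxPartialDerivAt E f j x v ↔ HasApproxPartialDerivAt E f' j x v := by
  refine forall_congr' fun ε => forall_congr' fun hε => ?_
  rw [h x hx]
  refine iff_of_eq ?_
  congr 1
  ext t
  refine and_congr_right fun ht => ?_
  rw [h _ ht]

lemma main_a (hE : MeasurableSet E) (hf : Measurable f) (j : Fin n) :
    MeasurableSet (finiteApDilatationSet E f j) := by
  have : finiteApDilatationSet E f j = E ∩ ⋃ k : ℕ, {x | HasDensityAt (volume : Measure ℝ)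
      {t | (x, t) ∈ ({p | p.1 + p.2 • EuclideanSpace.single j (1 : ℝ) ∈ E} ∩
        {p | (k:ℝ) < ‖f (p.1 + p.2 • EuclideanSpace.single j (1 : ℝ)) - f p.1‖ / |p.2|} :
        Set (EuclideanSpace ℝ (Fin n) × ℝ))} 0 0} := by
    ext x
    refine and_congr_right fun hx => ?_
    rw [mem_iUnion]
    constructor
    · rintro ⟨s, hs⟩
      obtain ⟨k, hk⟩ := exists_nat_ge s
      refine ⟨k, zd_mono' ?_ hs⟩
      rintro t - ⟨h1, h2⟩
      exact ⟨h1, lt_of_le_of_lt hk h2⟩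
    · rintro ⟨k, hk⟩
      exact ⟨k, hk⟩
  rw [this]
  have hadd : Measurable (fun p : EuclideanSpace ℝ (Fin n) × ℝ =>
    p.1 + p.2 • EuclideanSpace.single j (1 : ℝ)) := by fun_prop
  refine hE.inter (MeasurableSet.iUnion fun k => measurableSet_zd
    ((hE.preimage hadd).inter (measurableSet_lt measurable_const ?_)))
  exact ((hf.comp hadd).sub (hf.comp measurable_fst)).norm.div (by fun_prop)

lemma measurableSet_dom (hE : MeasurableSet E) (hf : Measurable f) (j : Fin n) :
    MeasurableSet (apPartialDerivDomain E f j) := by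
  have : apPartialDerivDomain E f j = ⋂ k : ℕ, ⋃ i : ℕ, {x | HasDensityAt (volume : Measure ℝ)
      {t | (x, t) ∈ ({p | p.1 + p.2 • EuclideanSpace.single j (1 : ℝ) ∈ E} ∩
        {p | 1 / ((k:ℝ) + 1) * |p.2| < ‖f (p.1 + p.2 • EuclideanSpace.single j (1 : ℝ)) - f p.1
          - p.2 • TopologicalSpace.denseSeq (EuclideanSpace ℝ (Fin m)) i‖} :
        Set (EuclideanSpace ℝ (Fin n) × ℝ))} 0 0} := by
    ext x
    simp only [mem_iInter, mem_iUnion]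
    exact exists_deriv_iff {t | x + t • EuclideanSpace.single j (1 : ℝ) ∈ E}
      (fun t => f (x + t • EuclideanSpace.single j (1 : ℝ)) - f x)
  rw [this]
  have hadd : Measurable (fun p : EuclideanSpace ℝ (Fin n) × ℝ =>
    p.1 + p.2 • EuclideanSpace.single j (1 : ℝ)) := by fun_prop
  refine MeasurableSet.iInter fun k => MeasurableSet.iUnion fun i => measurableSet_zd
    ((hE.preimage hadd).inter (measurableSet_lt (by fun_prop) ?_))
  exact (((hf.comp hadd).sub (hf.comp measurable_fst)).sub (by fun_prop)).norm

lemma main_b (hE : MeasurableSet E) (hf : Measurable f) (j : Fin n) :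
    ∀ᵐ x ∂volume, x ∈ finiteApDilatationSet E f j →
      ∃ v : EuclideanSpace ℝ (Fin m), HasApproxPartialDerivAt E f j x v := by
  have hm : MeasurableSet ((finiteApDilatationSet E f j)ᶜ ∪ apPartialDerivDomain E f j) :=
    (main_a hE hf j).compl.union (measurableSet_dom hE hf j)
  set e : EuclideanSpace ℝ (Fin n) := EuclideanSpace.single j (1 : ℝ) with he
  let L : ℝ →ₗ[ℝ] EuclideanSpace ℝ (Fin n) := LinearMap.toSpanSingleton ℝ _ e
  have := ae_mem_of_ae_add_linearMap_mem L (volume : Measure ℝ)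
    (volume : Measure (EuclideanSpace ℝ (Fin n))) hm ?_
  · filter_upwards [this] with x hx hxA
    exact hx.resolve_left (fun h => h hxA)
  intro y
  have hadd : Measurable (fun t : ℝ => y + t • e) := by fun_prop
  filter_upwards [one_dim (hE.preimage hadd) (hf.comp hadd)] with x hx
  by_cases hA : y + L x ∈ finiteApDilatationSet E f j
  swap
  · exact Or.inl hA
  right
  have hL : L x = x • e := rfl
  have hadd2 : ∀ t : ℝ, y + (x + t) • e = y + L x + t • e := by
    intro t; rw [hL, add_smul, add_assoc]
  obtain ⟨h1, h2⟩ := hA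
  simp only [mem_preimage, comp_apply, hadd2] at hx
  exact hx h1 h2

end

/-- (a) The set `A_j` is measurable; (b) `f` has an approximate partial derivative along
`e j` at almost every point of `A_j`; (c) the approximate partial derivative is a
measurable mapping on its domain of definition. -/
theorem measurable_approx_partial_deriv {n m : ℕ}
    (E : Set (EuclideanSpace ℝ (Fin n))) (hE : MeasurableSet E)
    (f : EuclideanSpace ℝ (Fin n) → EuclideanSpace ℝ (Fin m))
    (hf : Measurable (fun x : E => f x)) (j : Fin n) :
    MeasurableSet (finiteApDilatationSet E f j) ∧
    (∀ᵐ x ∂volume, x ∈ finiteApDilatationSet E f j →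
      ∃ v : EuclideanSpace ℝ (Fin m), HasApproxPartialDerivAt E f j x v) ∧
    (∃ g : EuclideanSpace ℝ (Fin n) → EuclideanSpace ℝ (Fin m),
      (∀ x ∈ apPartialDerivDomain E f j, HasApproxPartialDerivAt E f j x (g x)) ∧
      Measurable (fun x : apPartialDerivDomain E f j => g x)) := by
  classical
  set e : EuclideanSpace ℝ (Fin n) := EuclideanSpace.single j (1 : ℝ) with he
  set f0 : EuclideanSpace ℝ (Fin n) → EuclideanSpace ℝ (Fin m) := E.indicator f with hf0
  have hf0m : Measurable f0 := by
    refine measurable_of_restrict_of_restrict_compl hE ?_ ?_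
    · have : E.domRestrict f0 = fun x : E => f x := by
        ext1 x; simp [hf0, x.2]
      rw [this]; exact hf
    · have : Eᶜ.domRestrict f0 = fun _ => 0 := by
        ext1 x
        simp only [domRestrict_apply, hf0]
        exact indicator_of_notMem x.2 _
      rw [this]; exact measurable_const
  have hf0e : ∀ x ∈ E, f0 x = f x := fun x hx => indicator_of_mem hx f
  refine ⟨?_, ?_, ?_⟩
  · rw [finiteApDilatationSet_congr (f' := f0) (fun x hx => (hf0e x hx).symm)]
    exact main_a hE hf0m j
  · rw [finiteApDilatationSet_congr (f' := f0) (fun x hx => (hf0e x hx).symm)]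
    filter_upwards [main_b hE hf0m j] with x hx hxA
    obtain ⟨v, hv⟩ := hx hxA
    exact ⟨v, (hasApprox_congr (f' := f0) (fun x hx => (hf0e x hx).symm) hxA.1).2 hv⟩
  · let Z : EuclideanSpace ℝ (Fin n) → Prop := fun x =>
      HasDensityAt (volume : Measure ℝ) {t | x + t • e ∈ E} 0 0
    let D := apPartialDerivDomain E f j
    let g : EuclideanSpace ℝ (Fin n) → EuclideanSpace ℝ (Fin m) := fun x =>
      if h : ¬ Z x ∧ x ∈ D then h.2.choose else 0
    have hg : ∀ x ∈ D, HasApproxPartialDerivAt E f j x (g x) := by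
      intro x hx
      by_cases hZ : Z x
      · intro ε hε
        exact zd_mono' (fun t _ ht => ht.1) hZ
      · have : g x = hx.choose := dif_pos (⟨hZ, hx⟩ : ¬ Z x ∧ x ∈ D)
        rw [this]
        exact hx.choose_spec
    refine ⟨g, hg, ?_⟩
    let Q : Set (D × ℝ) := {p | (p.1 : EuclideanSpace ℝ (Fin n)) + p.2 • e ∈ E}
    have hadd : Measurable (fun p : D × ℝ => (p.1 : EuclideanSpace ℝ (Fin n)) + p.2 • e) := by
      fun_prop
    have hQ : MeasurableSet Q := hE.preimage hadd
    have hc : ∀ i, Measurable (fun y : D => if Z y then (0:ℝ) else f y i) := by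
      intro i
      refine measurable_aplim hQ (u := fun p => f0 (p.1 + p.2 • e) i) ?_ _ ?_ ?_
      · exact (measurable_pi_apply i).comp ((WithLp.measurable_ofLp _ _).comp (hf0m.comp hadd))
      · intro y hy
        exact if_pos hy
      · intro y ε hε
        by_cases hZ : Z y
        · exact zd_mono' (fun t _ ht => ht.1) hZ
        · simp only [if_neg hZ]
          have hpos : 0 < 1 + ‖g y‖ := by positivity
          refine zd_mono (ε / (1 + ‖g y‖)) (by positivity) ?_ (hg y y.2 1 one_pos)
          rintro t - htR ⟨h1, h2⟩
          refine ⟨h1, ?_⟩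
          rw [hf0e _ h1] at h2
          have h3 := PiLp.norm_apply_le (f (y + t • e) - f y) i
          rw [PiLp.sub_apply, Real.norm_eq_abs] at h3
          have h4 := norm_sub_norm_le (f (y + t • e) - f y) (t • g y)
          rw [norm_smul, Real.norm_eq_abs] at h4
          rw [lt_div_iff₀ hpos] at htR
          rw [← he]
          nlinarith
    have hgi : ∀ i, Measurable (fun y : D => g y i) := by
      intro i
      refine measurable_aplim hQ (u := fun p => (f0 (p.1 + p.2 • e) i -
        (if Z p.1 then (0:ℝ) else f p.1 i)) / p.2) ?_ _ ?_ ?_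
      · exact (((measurable_pi_apply i).comp ((WithLp.measurable_ofLp _ _).comp
          (hf0m.comp hadd))).sub ((hc i).comp measurable_fst)).div measurable_snd
      · intro y hy
        have : g y = 0 := dif_neg (fun h => h.1 hy)
        simp [this]
      · intro y ε hε
        by_cases hZ : Z y
        · exact zd_mono' (fun t _ ht => ht.1) hZ
        · simp only [if_neg hZ]
          refine zd_mono' ?_ (hg y y.2 ε hε)
          rintro t ht0 ⟨h1, h2⟩
          refine ⟨h1, ?_⟩
          rw [hf0e _ h1] at h2
          have h3 := PiLp.norm_apply_le (f (y + t • e) - f y - t • g y) i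
          rw [PiLp.sub_apply, PiLp.sub_apply, PiLp.smul_apply, Real.norm_eq_abs, smul_eq_mul] at h3
          refine lt_of_lt_of_le ?_ h3
          have : (f (y + t • e) i - f y i - t * g y i) =
              ((f (y + t • e) i - f y i) / t - g y i) * t := by field_simp
          rw [this, abs_mul]
          exact mul_lt_mul_of_pos_right h2 (abs_pos.2 ht0)
    have := (WithLp.measurable_toLp 2 (Fin m → ℝ)).comp (measurable_pi_lambda _ hgi)
    exact this
end

section
/- Let P ⊆ ℝ^n be a bounded Lebesgue-measurable set and f : P → ℝ^m a measurable mapping that is approximately differentiable at almost every point of P. Then for every ε > 0 there exist a closed set Q ⊆ P with λ(P \ Q) < ε and a C¹-smooth mapping g : ℝ^n → ℝ^m such that g = f on Q. -/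
open MeasureTheory Metric Filter Set Function
open scoped Topology ENNReal NNReal

section aux

variable {E F : Type*} [NormedAddCommGroup E] [NormedSpace ℝ E] [FiniteDimensional ℝ E]
  [MeasurableSpace E] [BorelSpace E]
  [NormedAddCommGroup F] [NormedSpace ℝ F] [FiniteDimensional ℝ F]

theorem aux_kernel (μ : Measure E) [μ.IsAddHaarMeasure] :
    ∃ (φ : E → ℝ) (C : ℝ≥0), ContDiff ℝ 1 φ ∧ HasCompactSupport φ ∧ ∫ w, φ w ∂μ = 1 ∧
      (∀ w, φ (-w) = φ w) ∧ (∀ w, 0 ≤ φ w) ∧ (∀ w, 1 ≤ ‖w‖ → φ w = 0) ∧ LipschitzWith C φ := by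
  let b : ContDiffBump (0 : E) := ⟨1/2, 1, by norm_num, by norm_num⟩
  obtain ⟨C, hC⟩ := ContDiff.lipschitzWith_of_hasCompactSupport (𝕂 := ℝ) (n := 1)
    (b.hasCompactSupport_normed (μ := μ)) b.contDiff_normed one_ne_zero
  refine ⟨b.normed μ, C, b.contDiff_normed, b.hasCompactSupport_normed, b.integral_normed,
    fun w => b.normed_neg w, fun w => b.nonneg_normed w, fun w hw => ?_, hC⟩
  by_contra h
  have : w ∈ Function.support (b.normed μ) := h
  rw [b.support_normed_eq] at this
  simp [b] at this
  linarith

theorem aux_unit (μ : Measure E) [μ.IsAddHaarMeasure] :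
    ∃ C : ℝ≥0, ∀ (g : E → F) (M : ℝ≥0), LipschitzWith M g →
      ∃ G : E → F, ContDiff ℝ 1 G ∧ LipschitzWith M G ∧ ∀ (η : ℝ≥0) (x y : E),
        (∃ L : E →L[ℝ] F, ∀ z, ‖z - x‖ ≤ 2 → ‖g z - g x - L (z - x)‖ ≤ η * ‖z - x‖) →
        (∃ L : E →L[ℝ] F, ∀ z, ‖z - y‖ ≤ 2 → ‖g z - g y - L (z - y)‖ ≤ η * ‖z - y‖) →
        ‖(G y - g y) - (G x - g x)‖ ≤ C * η * ‖y - x‖ := by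
  obtain ⟨φ, Cφ, hφ, hφc, hφ1, hφn, hφ0, hφs, hφL⟩ := aux_kernel μ
  set B : ℝ≥0 := (μ (closedBall (0:E) 2)).toNNReal with hB
  refine ⟨2 + (Cφ * 2 * B + 1), fun g M hg => ?_⟩
  have hgc : Continuous g := hg.continuous
  have hint : ∀ q : E → F, Continuous q → Integrable (fun w => φ w • q w) μ := by
    intro q hq
    exact (hφ.continuous.smul hq).integrable_of_hasCompactSupport hφc.smul_right
  have hodd : ∀ L : E →L[ℝ] F, ∫ w, φ w • L w ∂μ = 0 := by
    intro L
    have h1 := integral_neg_eq_self (fun w => φ w • L w) μ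
    simp only [hφn, map_neg, smul_neg, integral_neg] at h1
    have h2 : (2:ℝ) • ∫ w, φ w • L w ∂μ = 0 := by
      rw [two_smul]
      exact add_eq_zero_iff_eq_neg.mpr h1.symm
    exact (smul_eq_zero.1 h2).resolve_left two_ne_zero
  have hconst : ∀ c : F, ∫ w, φ w • c ∂μ = c := by
    intro c
    rw [integral_smul_const, hφ1, one_smul]
  have hφi : Integrable φ μ := hφ.continuous.integrable_of_hasCompactSupport hφc
  let G : E → F := fun x => ∫ w, φ w • g (x - w) ∂μ
  have hV : ∀ (L : E →L[ℝ] F) (x z : E),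
      G z - g x - L (z - x) = ∫ w, φ w • (g (z - w) - g x - L (z - w - x)) ∂μ := by
    intro L x z
    have e : ∀ w, φ w • (g (z - w) - g x - L (z - w - x)) =
        (φ w • g (z - w) - φ w • (g x + L (z - x))) + φ w • L w := by
      intro w
      simp only [map_sub, smul_sub, smul_add]
      abel
    simp_rw [e]
    rw [integral_add, integral_sub, hodd, hconst]
    · simp only [G]; abel
    · exact hint (fun w => g (z - w)) (by fun_prop)
    · exact hint (fun w => (g x + L (z - x))) (by fun_prop)
    · exact (hint (fun w => g (z - w)) (by fun_prop)).sub
        (hint (fun w => (g x + L (z - x))) (by fun_prop))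
    · exact hint (fun w => L w) (by fun_prop)
  refine ⟨G, ?_, ?_, ?_⟩
  · exact HasCompactSupport.contDiff_convolution_left (n := 1) (ContinuousLinearMap.lsmul ℝ ℝ)
      hφc hφ hgc.locallyIntegrable
  · refine LipschitzWith.of_dist_le_mul fun x y => ?_
    rw [dist_eq_norm, dist_eq_norm]
    simp only [G]
    rw [← integral_sub (hint (fun w => g (x - w)) (by fun_prop))
      (hint (fun w => g (y - w)) (by fun_prop))]
    have := norm_integral_le_of_norm_le (f := fun w => φ w • g (x - w) - φ w • g (y - w))
      (μ := μ) (hφi.mul_const (M * ‖x - y‖)) (Eventually.of_forall fun w => ?_)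
    · rwa [integral_mul_const, hφ1, one_mul] at this
    · rw [← smul_sub, norm_smul, Real.norm_of_nonneg (hφ0 w)]
      refine mul_le_mul_of_nonneg_left ?_ (hφ0 w)
      have := hg.dist_le_mul (x - w) (y - w)
      rw [dist_eq_norm, dist_eq_norm] at this
      simpa using this
  · intro η
    have hpt : ∀ x, (∃ L : E →L[ℝ] F, ∀ z, ‖z - x‖ ≤ 2 → ‖g z - g x - L (z - x)‖ ≤ η * ‖z - x‖) →
        ‖G x - g x‖ ≤ η := by
      rintro x ⟨L, hL⟩
      have h1 := hV L x x
      simp only [sub_self, map_zero, sub_zero] at h1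
      rw [h1]
      have := norm_integral_le_of_norm_le (f := fun w => φ w • (g (x - w) - g x - L (x - w - x)))
        (μ := μ) (hφi.mul_const (η:ℝ)) (Eventually.of_forall fun w => ?_)
      · rwa [integral_mul_const, hφ1, one_mul] at this
      · rw [norm_smul, Real.norm_of_nonneg (hφ0 w)]
        rcases le_or_gt 1 ‖w‖ with h | h
        · simp [hφs w h]
        · refine mul_le_mul_of_nonneg_left ?_ (hφ0 w)
          have h2 := hL (x - w) (by simp; linarith)
          refine h2.trans ?_
          simp only [sub_sub_cancel_left, norm_neg]
          exact mul_le_of_le_one_right η.2 h.le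
    intro x y hx hy
    rcases le_or_gt 1 ‖y - x‖ with h | h
    · calc ‖(G y - g y) - (G x - g x)‖ ≤ ‖G y - g y‖ + ‖G x - g x‖ := norm_sub_le _ _
        _ ≤ η + η := add_le_add (hpt y hy) (hpt x hx)
        _ = 2 * η * 1 := by ring
        _ ≤ _ := by
          push_cast
          gcongr
          have : (0:ℝ) ≤ Cφ * 2 * B + 1 := by positivity
          linarith
    · obtain ⟨L, hL⟩ := hx
      have e1 : ∀ z, G z - g x - L (z - x) = ∫ w, φ (z - w) • (g w - g x - L (w - x)) ∂μ := by
        intro z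
        rw [hV L x z, ← integral_sub_left_eq_self _ μ z]
        simp
      have hi : ∀ z, Integrable (fun w => φ (z - w) • (g w - g x - L (w - x))) μ := by
        intro z
        have := (hint (fun w => g (z - w) - g x - L (z - w - x)) (by fun_prop)).comp_sub_left z
        simpa using this
      have e2 : (G y - g y) - (G x - g x) =
          (∫ w, (φ (y - w) - φ (x - w)) • (g w - g x - L (w - x)) ∂μ)
            - (g y - g x - L (y - x)) := by
        simp_rw [sub_smul (φ (y - _))]
        rw [integral_sub (hi y) (hi x), ← e1, ← e1]
        simp only [sub_self, map_zero, sub_zero]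
        abel
      have e3 : ‖∫ w, (φ (y - w) - φ (x - w)) • (g w - g x - L (w - x)) ∂μ‖ ≤
          (Cφ * ‖y - x‖) * (η * 2) * B := by
        rw [← setIntegral_eq_integral_of_forall_compl_eq_zero (s := closedBall x 2)]
        · have hBe : (B : ℝ) = μ.real (closedBall x 2) := by
            rw [hB, measureReal_def, Measure.addHaar_closedBall_center μ x]; rfl
          rw [hBe]
          refine norm_setIntegral_le_of_norm_le_const measure_closedBall_lt_top fun w hw => ?_
          rw [mem_closedBall, dist_eq_norm] at hw
          rw [norm_smul]
          gcongr
          · have := hφL.dist_le_mul (y - w) (x - w)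
            rw [dist_eq_norm, dist_eq_norm] at this
            simpa using this
          · exact (hL w hw).trans (by gcongr)
        · intro w hw
          rw [mem_closedBall, dist_eq_norm, not_le] at hw
          have a1 : 1 ≤ ‖x - w‖ := by rw [norm_sub_rev]; linarith
          have a2 : 1 ≤ ‖y - w‖ := by
            have := norm_sub_le_norm_sub_add_norm_sub w y x
            rw [norm_sub_rev w y] at this
            linarith
          rw [hφs _ a1, hφs _ a2]; simp
      rw [e2]
      refine (norm_sub_le _ _).trans ?_
      have e4 := hL y (by linarith)
      have : (0:ℝ) ≤ η * ‖y - x‖ := by positivity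
      push_cast
      nlinarith

theorem aux_scaled (μ : Measure E) [μ.IsAddHaarMeasure] :
    ∃ C : ℝ≥0, ∀ (g : E → F) (M : ℝ≥0) (δ : ℝ), 0 < δ → LipschitzWith M g →
      ∃ G : E → F, ContDiff ℝ 1 G ∧ LipschitzWith M G ∧ ∀ (η : ℝ≥0) (x y : E),
        (∃ L : E →L[ℝ] F, ∀ z, ‖z - x‖ ≤ 2 * δ → ‖g z - g x - L (z - x)‖ ≤ η * ‖z - x‖) →
        (∃ L : E →L[ℝ] F, ∀ z, ‖z - y‖ ≤ 2 * δ → ‖g z - g y - L (z - y)‖ ≤ η * ‖z - y‖) →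
        ‖(G y - g y) - (G x - g x)‖ ≤ C * η * ‖y - x‖ := by
  obtain ⟨C, hC⟩ := aux_unit (F := F) μ
  refine ⟨C, fun g M δ hδ hg => ?_⟩
  have hδ0 := hδ.ne'
  have hsc : ∀ (q : E → F) (t : ℝ), 0 < t → LipschitzWith M q →
      LipschitzWith M (fun z => t⁻¹ • q (t • z)) := by
    intro q t ht hq
    refine LipschitzWith.of_dist_le_mul fun x y => ?_
    have := hq.dist_le_mul (t • x) (t • y)
    rw [dist_eq_norm] at this ⊢
    rw [dist_eq_norm] at this ⊢
    rw [← smul_sub, norm_smul] at this ⊢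
    rw [norm_inv, Real.norm_of_nonneg ht.le] at *
    rw [inv_mul_le_iff₀ ht]
    linarith
  obtain ⟨G, hG1, hG2, hG3⟩ := hC _ M (hsc g δ hδ hg)
  refine ⟨fun x => δ • G (δ⁻¹ • x), by fun_prop, ?_, ?_⟩
  · simpa using hsc G δ⁻¹ (inv_pos.2 hδ) hG2
  · intro η x y hx hy
    have tr : ∀ x, (∃ L : E →L[ℝ] F, ∀ z, ‖z - x‖ ≤ 2 * δ →
          ‖g z - g x - L (z - x)‖ ≤ η * ‖z - x‖) →
        (∃ L : E →L[ℝ] F, ∀ z, ‖z - δ⁻¹ • x‖ ≤ 2 →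
          ‖δ⁻¹ • g (δ • z) - δ⁻¹ • g (δ • δ⁻¹ • x) - L (z - δ⁻¹ • x)‖ ≤ η * ‖z - δ⁻¹ • x‖) := by
      rintro x ⟨L, hL⟩
      refine ⟨L, fun z hz => ?_⟩
      have en : ‖δ • z - x‖ = δ * ‖z - δ⁻¹ • x‖ := by
        rw [← Real.norm_of_nonneg hδ.le, ← norm_smul, Real.norm_of_nonneg hδ.le, smul_sub,
          smul_inv_smul₀ hδ0]
      have h := hL (δ • z) (by rw [en]; nlinarith)
      rw [smul_inv_smul₀ hδ0]
      have : δ⁻¹ • g (δ • z) - δ⁻¹ • g x - L (z - δ⁻¹ • x) =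
          δ⁻¹ • (g (δ • z) - g x - L (δ • z - x)) := by
        simp only [smul_sub, map_sub, map_smul, inv_smul_smul₀ hδ0]
      rw [this, norm_smul, norm_inv, Real.norm_of_nonneg hδ.le, inv_mul_le_iff₀ hδ]
      rw [en] at h
      linarith
    have h := hG3 η _ _ (tr x hx) (tr y hy)
    simp only [smul_inv_smul₀ hδ0, ← smul_sub, norm_smul] at h
    have : (δ • G (δ⁻¹ • y) - g y) - (δ • G (δ⁻¹ • x) - g x) =
        δ • ((G (δ⁻¹ • y) - δ⁻¹ • g y) - (G (δ⁻¹ • x) - δ⁻¹ • g x)) := by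
      simp only [smul_sub, smul_inv_smul₀ hδ0]
    rw [this, norm_smul, Real.norm_of_nonneg hδ.le]
    rw [norm_inv, Real.norm_of_nonneg hδ.le] at h
    calc _ ≤ δ * (C * η * (δ⁻¹ * ‖y - x‖)) := by gcongr
      _ = _ := by field_simp

theorem aux_step (μ : Measure E) [μ.IsAddHaarMeasure] (K : Set E) (hK : IsCompact K)
    (g : E → F) (M : ℝ≥0) (hg : LipschitzWith M g) (η : ℝ≥0) (hη : 0 < η)
    (ε : ℝ≥0∞) (hε : 0 < ε) :
    ∃ h u : E → F, ContDiff ℝ 1 h ∧ LipschitzWith M h ∧ LipschitzWith η u ∧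
      μ (K \ {x | g x = h x + u x}) < ε := by
  obtain ⟨C, hC⟩ := aux_scaled (F := F) μ
  set A := lipschitzExtensionConstant F
  set η' : ℝ≥0 := η / (A * C + 1) with hη'
  have hη'0 : 0 < η' := by positivity
  have hη'1 : A * (C * η') ≤ η := by
    rw [hη', ← mul_assoc, mul_div_assoc']
    apply NNReal.div_le_of_le_mul
    rw [mul_comm]
    gcongr
    exact le_self_add
  let S : ℕ → Set E := fun j => {x | ∃ L : E →L[ℝ] F, ∀ z, ‖z - x‖ ≤ 2 * (1 / ((j : ℝ) + 1)) →
    ‖g z - g x - L (z - x)‖ ≤ η' * ‖z - x‖}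
  have hSm : Monotone S := by
    rintro i j hij x ⟨L, hL⟩
    refine ⟨L, fun z hz => hL z (hz.trans ?_)⟩
    gcongr
  have hKS : μ K = ⨆ j, μ (K ∩ S j) := by
    have hm : Monotone (fun j => K ∩ S j) := fun i j hij => inter_subset_inter_right _ (hSm hij)
    rw [← hm.measure_iUnion]
    refine measure_congr ?_
    filter_upwards [hg.ae_differentiableAt (μ := μ)] with x hx
    refine propext ⟨fun hxK => ?_, fun hxK => ?_⟩
    · have h1 := hx.hasFDerivAt.isLittleO.def hη'0
      rw [Metric.eventually_nhds_iff] at h1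
      obtain ⟨r, hr, h1⟩ := h1
      obtain ⟨j, hj⟩ := exists_nat_one_div_lt (half_pos hr)
      refine mem_iUnion.2 ⟨j, hxK, fderiv ℝ g x, fun z hz => h1 ?_⟩
      rw [dist_eq_norm]
      linarith
    · obtain ⟨j, hj⟩ := mem_iUnion.1 hxK
      exact hj.1
  have hKf : μ K ≠ ∞ := hK.measure_lt_top.ne
  obtain ⟨j, hj⟩ : ∃ j, μ K < μ (K ∩ S j) + ε := by
    rcases eq_or_ne (μ K) 0 with h0 | h0
    · exact ⟨0, by rw [h0]; exact hε.trans_le le_add_self⟩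
    · have : μ K - ε < ⨆ j, μ (K ∩ S j) := by
        rw [← hKS]; exact ENNReal.sub_lt_self hKf h0 hε.ne'
      obtain ⟨j, hj⟩ := lt_iSup_iff.1 this
      refine ⟨j, ?_⟩
      by_contra hcon
      rw [not_lt] at hcon
      have hεf : ε ≠ ∞ := ne_top_of_le_ne_top hKf (le_add_self.trans hcon)
      exact absurd (ENNReal.le_sub_of_add_le_right hεf hcon) (not_le.2 hj)
  obtain ⟨h, hh1, hh2, hh3⟩ := hC g M (1 / ((j : ℝ) + 1)) (by positivity) hg
  have hl : LipschitzOnWith (C * η') (fun x => g x - h x) (S j) := by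
    refine LipschitzOnWith.of_dist_le_mul fun x hx y hy => ?_
    have := hh3 η' x y hx hy
    rw [dist_eq_norm, dist_eq_norm, norm_sub_rev x y]
    push_cast
    refine le_trans (le_of_eq ?_) this
    congr 1
    abel
  obtain ⟨u, hu1, hu2⟩ := hl.extend_finite_dimension
  refine ⟨h, u, hh1, hh2, hu1.weaken hη'1, ?_⟩
  have hcl : IsClosed {x | g x = h x + u x} :=
    isClosed_eq hg.continuous (hh2.continuous.add hu1.continuous)
  have hsub : K ∩ S j ⊆ K ∩ {x | g x = h x + u x} := by
    rintro x ⟨hx1, hx2⟩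
    refine ⟨hx1, ?_⟩
    have := hu2 hx2
    simp only [mem_ofPred_eq, ← this]
    abel
  have h1 := measure_inter_add_sdiff K hcl.measurableSet (μ := μ)
  have h2 := measure_mono (μ := μ) hsub
  have h3 : μ (K ∩ {x | g x = h x + u x}) ≠ ∞ :=
    ne_top_of_le_ne_top hKf (measure_mono inter_subset_left)
  rw [← h1] at hj
  exact lt_of_add_lt_add_left (hj.trans_le (add_le_add_left h2 ε))

theorem aux_lip (μ : Measure E) [μ.IsAddHaarMeasure] (K : Set E) (hK : IsCompact K)
    (g : E → F) (M : ℝ≥0) (hg : LipschitzWith M g) (ε : ℝ≥0∞) (hε : 0 < ε) :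
    ∃ Q ⊆ K, IsClosed Q ∧ μ (K \ Q) < ε ∧ ∃ h : E → F, ContDiff ℝ 1 h ∧ EqOn h g Q := by
  obtain ⟨ε', hε'0, hε'⟩ := ENNReal.exists_pos_sum_of_countable' hε.ne' ℕ
  let c : ℕ → ℝ≥0 := fun k => (M + 1) * (1 / 2) ^ k
  have hc0 : ∀ k, 0 < c k := fun k => by positivity
  have hcs : Summable (fun k => (c k : ℝ)) := by
    simp only [c]
    push_cast
    exact summable_geometric_two.mul_left _
  have step : ∀ (k : ℕ) (g : {g : E → F // LipschitzWith (c k) g}),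
      ∃ (h : E → F) (u : {g : E → F // LipschitzWith (c (k+1)) g}), ContDiff ℝ 1 h ∧
        LipschitzWith (c k) h ∧ μ (K \ {x | g.1 x = h x + u.1 x}) < ε' k := by
    intro k g
    obtain ⟨h, u, h1, h2, h3, h4⟩ := aux_step μ K hK g.1 (c k) g.2 (c (k+1)) (hc0 _) _ (hε'0 k)
    exact ⟨h, ⟨u, h3⟩, h1, h2, h4⟩
  choose H U hH1 hH2 hHU using step
  let gs : (k : ℕ) → {g : E → F // LipschitzWith (c k) g} := fun k =>
    Nat.rec (motive := fun k => {g : E → F // LipschitzWith (c k) g})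
      ⟨g, hg.weaken (by simp [c])⟩ (fun k gk => U k gk) k
  have hgs0 : (gs 0).1 = g := rfl
  have hgss : ∀ k, gs (k+1) = U k (gs k) := fun k => rfl
  let hs : ℕ → E → F := fun k => H k (gs k)
  let Z : ℕ → Set E := fun k => {x | (gs k).1 x = hs k x + (gs (k+1)).1 x}
  have hZc : ∀ k, IsClosed (Z k) := fun k => isClosed_eq (gs k).2.continuous
    ((hH2 k (gs k)).continuous.add (gs (k+1)).2.continuous)
  refine ⟨K ∩ ⋂ k, Z k, inter_subset_left, hK.isClosed.inter (isClosed_iInter hZc), ?_, ?_⟩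
  · have : K \ (K ∩ ⋂ k, Z k) ⊆ ⋃ k, (K \ Z k) := by
      rintro x ⟨hx1, hx2⟩
      have : ∃ k, x ∉ Z k := by
        by_contra hcon
        push Not at hcon
        exact hx2 ⟨hx1, mem_iInter.2 hcon⟩
      obtain ⟨k, hk⟩ := this
      exact mem_iUnion.2 ⟨k, hx1, hk⟩
    refine lt_of_le_of_lt ((measure_mono this).trans (measure_iUnion_le _)) (lt_of_le_of_lt ?_ hε')
    exact ENNReal.tsum_le_tsum fun k => (hHU k (gs k)).le
  · rcases (K ∩ ⋂ k, Z k).eq_empty_or_nonempty with h0 | ⟨x₀, hx₀⟩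
    · exact ⟨fun _ => 0, contDiff_const, by rw [h0]; exact eqOn_empty _ _⟩
    -- normalise at `x₀`
    have hc' : Tendsto (fun k => (c k : ℝ)) atTop (𝓝 0) := hcs.tendsto_atTop_zero
    let ks : ℕ → E → F := fun k x => hs k x - hs k x₀
    have hpart : ∀ x ∈ K ∩ ⋂ k, Z k, ∀ N, ∑ k ∈ Finset.range N, ks k x =
        (g x - g x₀) - ((gs N).1 x - (gs N).1 x₀) := by
      intro x hx N
      induction N with
      | zero => simp [hgs0]
      | succ N ih =>
        rw [Finset.sum_range_succ, ih]
        have a1 : (gs N).1 x = hs N x + (gs (N+1)).1 x := mem_iInter.1 hx.2 N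
        have a2 : (gs N).1 x₀ = hs N x₀ + (gs (N+1)).1 x₀ := mem_iInter.1 hx₀.2 N
        rw [a1, a2]
        simp only [ks]
        abel
    have hd : ∀ k x, HasFDerivAt (ks k) (fderiv ℝ (hs k) x) x := by
      intro k x
      exact (((hH1 k (gs k)).differentiable one_ne_zero x).hasFDerivAt).sub_const _
    have hb : ∀ k x, ‖fderiv ℝ (hs k) x‖ ≤ c k := fun k x =>
      norm_fderiv_le_of_lipschitz ℝ (hH2 k (gs k))
    have hsum0 : Summable (fun k => ks k x₀) := by
      simp only [ks, sub_self]
      exact summable_zero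
    refine ⟨fun x => g x₀ + ∑' k, ks k x, ?_, ?_⟩
    · refine contDiff_const.add (contDiff_one_iff_hasFDerivAt.2
        ⟨fun x => ∑' k, fderiv ℝ (hs k) x, ?_, fun x => ?_⟩)
      · exact continuous_tsum (fun k => (hH1 k (gs k)).continuous_fderiv one_ne_zero) hcs hb
      · exact hasFDerivAt_tsum hcs hd hb hsum0 x
    · intro x hx
      have hs1 := (summable_of_summable_hasFDerivAt hcs hd hb hsum0 x).hasSum.tendsto_sum_nat
      have hs2 : Tendsto (fun N => ∑ k ∈ Finset.range N, ks k x) atTop (𝓝 (g x - g x₀)) := by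
        simp_rw [hpart x hx]
        have : Tendsto (fun N => (gs N).1 x - (gs N).1 x₀) atTop (𝓝 0) := by
          refine squeeze_zero_norm (a := fun N => (c N : ℝ) * dist x x₀) (fun N => ?_) ?_
          · rw [← dist_eq_norm]; exact (gs N).2.dist_le_mul x x₀
          · simpa using hc'.mul_const (dist x x₀)
        simpa using this.const_sub (g x - g x₀)
      have := tendsto_nhds_unique hs1 hs2
      simp only [this]
      abel

end aux


theorem aux_density {n m : ℕ}
    (P : Set (EuclideanSpace ℝ (Fin n)))
    (f : EuclideanSpace ℝ (Fin n) → EuclideanSpace ℝ (Fin m)) (k : ℕ)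
    (x y : EuclideanSpace ℝ (Fin n)) (θ : ℝ≥0∞)
    (hθ : θ = (ENNReal.ofReal (2 ^ n) * 4)⁻¹)
    (hx : ∀ r : ℝ, 0 < r → r < 1 / ((k:ℝ) + 1) →
      volume ({z | z ∉ P ∨ k * ‖z - x‖ < ‖f z - f x‖} ∩ ball x r) ≤ θ * volume (ball x r))
    (hy : ∀ r : ℝ, 0 < r → r < 1 / ((k:ℝ) + 1) →
      volume ({z | z ∉ P ∨ k * ‖z - y‖ < ‖f z - f y‖} ∩ ball y r) ≤ θ * volume (ball y r))
    (hxk : ‖f x‖ ≤ k) (hyk : ‖f y‖ ≤ k) :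
    ‖f x - f y‖ ≤ (4 * k * (k + 1) + 3 * k) * ‖x - y‖ := by
  rcases eq_or_ne x y with rfl | hne
  · simp
  have hr : 0 < ‖x - y‖ := norm_pos_iff.2 (sub_ne_zero.2 hne)
  set r := ‖x - y‖ with hrdef
  rcases lt_or_ge (2 * r) (1 / ((k:ℝ) + 1)) with h | h
  · have hball : ∀ z : EuclideanSpace ℝ (Fin n), θ * volume (ball z (2 * r)) =
        volume (ball x r) / 4 := by
      intro z
      rw [Measure.addHaar_ball_of_pos volume z (by positivity : 0 < 2 * r),
        Measure.addHaar_ball_of_pos volume x hr, mul_pow, hθ,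
        ENNReal.ofReal_mul (by positivity), finrank_euclideanSpace_fin]
      have a0 : ENNReal.ofReal (2 ^ n) ≠ 0 := by simp
      have a1 : ENNReal.ofReal (2 ^ n) ≠ ∞ := ENNReal.ofReal_ne_top
      rw [ENNReal.mul_inv (Or.inl a0) (Or.inl a1), div_eq_mul_inv]
      calc _ = ((ENNReal.ofReal (2 ^ n))⁻¹ * ENNReal.ofReal (2 ^ n)) *
            (ENNReal.ofReal (r ^ n) * volume (ball (0 : EuclideanSpace ℝ (Fin n)) 1) * 4⁻¹) := by
            ring
        _ = _ := by rw [ENNReal.inv_mul_cancel a0 a1, one_mul]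
    have h1 := hx (2 * r) (by positivity) h
    have h2 := hy (2 * r) (by positivity) h
    rw [hball] at h1 h2
    obtain ⟨z, hz, hz1, hz2⟩ : ∃ z ∈ ball x r, z ∉ {z | z ∉ P ∨ k * ‖z - x‖ < ‖f z - f x‖} ∧
        z ∉ {z | z ∉ P ∨ k * ‖z - y‖ < ‖f z - f y‖} := by
      by_contra hcon
      push Not at hcon
      have hsub : ball x r ⊆ ({z | z ∉ P ∨ k * ‖z - x‖ < ‖f z - f x‖} ∩ ball x (2 * r)) ∪
          ({z | z ∉ P ∨ k * ‖z - y‖ < ‖f z - f y‖} ∩ ball y (2 * r)) := by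
        intro z hz
        by_cases hzx : z ∈ {z | z ∉ P ∨ k * ‖z - x‖ < ‖f z - f x‖}
        · exact Or.inl ⟨hzx, ball_subset_ball (by linarith) hz⟩
        · refine Or.inr ⟨hcon z hz hzx, ?_⟩
          rw [mem_ball] at hz ⊢
          have := dist_triangle z x y
          rw [dist_eq_norm x y] at this
          linarith
      have h3 := (measure_mono hsub).trans (measure_union_le (μ := volume) _ _)
      have h4 := h3.trans (add_le_add h1 h2)
      have hb0 : volume (ball x r) ≠ 0 := (measure_ball_pos volume x hr).ne'
      have hb1 : volume (ball x r) ≠ ∞ := measure_ball_lt_top.ne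
      rw [← ENNReal.ofReal_toReal hb1] at h4
      have hp := ENNReal.toReal_pos hb0 hb1
      set t := (volume (ball x r)).toReal
      have e4 : (4 : ℝ≥0∞) = ENNReal.ofReal 4 := by simp
      rw [e4, ← ENNReal.ofReal_div_of_pos (by norm_num), ← ENNReal.ofReal_add (by positivity)
        (by positivity), ENNReal.ofReal_le_ofReal_iff (by positivity)] at h4
      linarith
    simp only [mem_ofPred_eq, not_or, not_lt] at hz1 hz2
    rw [mem_ball, dist_eq_norm] at hz
    have hzy : ‖z - y‖ ≤ 2 * r := by
      have := norm_sub_le_norm_sub_add_norm_sub z x y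
      linarith
    have k0 : (0:ℝ) ≤ k := Nat.cast_nonneg k
    calc ‖f x - f y‖ ≤ ‖f x - f z‖ + ‖f z - f y‖ := norm_sub_le_norm_sub_add_norm_sub _ _ _
      _ ≤ k * r + k * (2 * r) := by
        rw [norm_sub_rev (f x)]
        exact add_le_add (hz1.2.trans (by gcongr)) (hz2.2.trans (by gcongr))
      _ ≤ _ := by nlinarith [mul_nonneg (mul_nonneg k0 k0) hr.le, mul_nonneg k0 hr.le]
  · have k0 : (0:ℝ) ≤ k := Nat.cast_nonneg k
    rw [div_le_iff₀ (by positivity)] at h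
    have := norm_sub_le (f x) (f y)
    nlinarith [mul_nonneg k0 hr.le]

theorem aux_ev {X : Type*} [PseudoMetricSpace X] [MeasurableSpace X] {μ : Measure X}
    {Y : Set X} {a : X} (h : HasDensityAt μ Y a 0) (hpos : ∀ r, 0 < r → μ (ball a r) ≠ 0)
    (hfin : ∀ r, μ (ball a r) ≠ ∞)
    {θ : ℝ≥0∞} (hθ : 0 < θ) :
    ∀ᶠ r in 𝓝[>] (0:ℝ), μ (Y ∩ ball a r) ≤ θ * μ (ball a r) := by
  filter_upwards [(tendsto_order.1 h).2 θ hθ, self_mem_nhdsWithin] with r hr hr0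
  exact (ENNReal.div_le_iff (hpos r hr0) (hfin r)).1 hr.le

theorem aux_reduce {n m : ℕ}
    (P : Set (EuclideanSpace ℝ (Fin n))) (hP : MeasurableSet P)
    (hPf : volume P ≠ ∞)
    (f : EuclideanSpace ℝ (Fin n) → EuclideanSpace ℝ (Fin m))
    (hf : Measurable (fun x : P => f x))
    (hap : ∀ᵐ a ∂volume, a ∈ P →
      ∃ L : EuclideanSpace ℝ (Fin n) →ₗ[ℝ] EuclideanSpace ℝ (Fin m),
        IsApproxDifferential P f a L) (ε : ℝ≥0∞) (hε : 0 < ε) :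
    ∃ (g : EuclideanSpace ℝ (Fin n) → EuclideanSpace ℝ (Fin m)) (M : ℝ≥0), LipschitzWith M g ∧
      MeasurableSet {x ∈ P | f x = g x} ∧ volume (P \ {x ∈ P | f x = g x}) < ε := by
  set θ : ℝ≥0∞ := (ENNReal.ofReal (2 ^ n) * 4)⁻¹ with hθ
  have hθ0 : 0 < θ := by
    rw [hθ, ENNReal.inv_pos]
    exact ENNReal.mul_ne_top ENNReal.ofReal_ne_top (by simp)
  let S : ℕ → Set (EuclideanSpace ℝ (Fin n)) := fun k => {a | ‖f a‖ ≤ k ∧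
    ∀ r : ℝ, 0 < r → r < 1 / ((k:ℝ) + 1) →
      volume ({z | z ∉ P ∨ k * ‖z - a‖ < ‖f z - f a‖} ∩ ball a r) ≤ θ * volume (ball a r)}
  have hSm : Monotone S := by
    rintro i j hij a ⟨h1, h2⟩
    have hij' : (i:ℝ) ≤ j := by exact_mod_cast hij
    refine ⟨h1.trans hij', fun r hr0 hr => ?_⟩
    refine le_trans (measure_mono (inter_subset_inter_left _ ?_)) (h2 r hr0 (hr.trans_le ?_))
    · rintro z (hz | hz)
      · exact Or.inl hz
      · exact Or.inr (lt_of_le_of_lt (by gcongr) hz)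
    · gcongr
  have hPS : volume P = ⨆ j, volume (P ∩ S j) := by
    have hm : Monotone (fun j => P ∩ S j) := fun i j hij => inter_subset_inter_right _ (hSm hij)
    rw [← hm.measure_iUnion]
    refine measure_congr ?_
    filter_upwards [hap, Besicovitch.ae_tendsto_measure_inter_div_of_measurableSet volume hP.compl]
      with a ha1 ha2
    refine propext ⟨fun haP => ?_, fun haP => ?_⟩
    · obtain ⟨L, hL⟩ := ha1 haP
      have ind : Pᶜ.indicator (1 : EuclideanSpace ℝ (Fin n) → ℝ≥0∞) a = 0 := by
        have haP' : a ∈ P := haP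
        simp [haP']
      rw [ind] at ha2
      have hpos : ∀ r, 0 < r → volume (ball a r) ≠ 0 := fun r hr =>
        (measure_ball_pos volume a hr).ne'
      have hfin : ∀ r, volume (ball a r) ≠ ∞ := fun r => measure_ball_lt_top.ne
      have hden : HasDensityAt volume Pᶜ a 0 := by
        refine tendsto_of_tendsto_of_tendsto_of_le_of_le' tendsto_const_nhds ha2
          (Eventually.of_forall fun _ => zero_le) ?_
        filter_upwards [self_mem_nhdsWithin] with r hr
        have hr' : (0:ℝ) < r := hr
        have : volume (closedBall a r) = volume (ball a r) := by
          rw [Measure.addHaar_closedBall _ _ hr'.le, Measure.addHaar_ball_of_pos _ _ hr']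
        rw [this]
        gcongr
        exact ball_subset_closedBall
      have hθ2 : 0 < θ / 2 := ENNReal.half_pos hθ0.ne'
      have ev := (aux_ev hden hpos hfin hθ2).and (aux_ev (hL 1 one_pos) hpos hfin hθ2)
      obtain ⟨ρ, hρ, hev⟩ := mem_nhdsGT_iff_exists_Ioo_subset.1 ev
      have hρ' : (0:ℝ) < ρ := hρ
      obtain ⟨k1, hk1⟩ := exists_nat_one_div_lt hρ'
      let L' := LinearMap.toContinuousLinearMap L
      obtain ⟨k2, hk2⟩ := exists_nat_ge (‖L'‖ + 1)
      obtain ⟨k3, hk3⟩ := exists_nat_ge ‖f a‖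
      set k := k1 + k2 + k3
      have kk1 : (k1:ℝ) ≤ k := by simp only [k]; exact_mod_cast (by omega)
      have kk2 : (k2:ℝ) ≤ k := by simp only [k]; exact_mod_cast (by omega)
      have kk3 : (k3:ℝ) ≤ k := by simp only [k]; exact_mod_cast (by omega)
      refine mem_iUnion.2 ⟨k, haP, hk3.trans kk3, fun r hr0 hr => ?_⟩
      have hrρ : r < ρ := by
        refine hr.trans (lt_of_le_of_lt ?_ hk1)
        gcongr
      obtain ⟨b1, b2⟩ := hev ⟨hr0, hrρ⟩
      have hsub : {z | z ∉ P ∨ k * ‖z - a‖ < ‖f z - f a‖} ∩ ball a r ⊆ (Pᶜ ∩ ball a r) ∪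
          ({x ∈ P | 1 * ‖x - a‖ < ‖f x - f a - L (x - a)‖} ∩ ball a r) := by
        rintro z ⟨hz1, hz2⟩
        by_cases hzP : z ∈ P
        · refine Or.inr ⟨⟨hzP, ?_⟩, hz2⟩
          have hz3 : k * ‖z - a‖ < ‖f z - f a‖ := hz1.resolve_left (fun h => h hzP)
          have h5 : ‖L (z - a)‖ ≤ ‖L'‖ * ‖z - a‖ := L'.le_opNorm (z - a)
          have h6 := norm_sub_norm_le (f z - f a) (L (z - a))
          have h7 : (‖L'‖ + 1) * ‖z - a‖ ≤ k * ‖z - a‖ := by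
            gcongr
            exact hk2.trans kk2
          linarith
        · exact Or.inl ⟨hzP, hz2⟩
      refine (measure_mono hsub).trans ((measure_union_le _ _).trans ((add_le_add b1 b2).trans ?_))
      rw [← add_mul, ENNReal.add_halves]
    · obtain ⟨j, hj⟩ := mem_iUnion.1 haP
      exact hj.1
  obtain ⟨j, hj⟩ : ∃ j, volume P < volume (P ∩ S j) + ε := by
    rcases eq_or_ne (volume P) 0 with h0 | h0
    · exact ⟨0, by rw [h0]; exact hε.trans_le le_add_self⟩
    · have : volume P - ε < ⨆ j, volume (P ∩ S j) := by
        rw [← hPS]; exact ENNReal.sub_lt_self hPf h0 hε.ne'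
      obtain ⟨j, hj⟩ := lt_iSup_iff.1 this
      refine ⟨j, ?_⟩
      by_contra hcon
      rw [not_lt] at hcon
      have hεf : ε ≠ ∞ := ne_top_of_le_ne_top hPf (le_add_self.trans hcon)
      exact absurd (ENNReal.le_sub_of_add_le_right hεf hcon) (not_le.2 hj)
  have hl : LipschitzOnWith (4 * j * (j + 1) + 3 * j) f (S j) := by
    refine LipschitzOnWith.of_dist_le_mul fun x hx y hy => ?_
    rw [dist_eq_norm, dist_eq_norm]
    push_cast
    exact aux_density P f j x y θ hθ hx.2 hy.2 hx.1 hy.1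
  obtain ⟨g, hg1, hg2⟩ := hl.extend_finite_dimension
  have hmeas : MeasurableSet {x ∈ P | f x = g x} := by
    have h1 : MeasurableSet {x : P | f x = g x} :=
      measurableSet_eq_fun hf (hg1.continuous.measurable.comp measurable_subtype_coe)
    have h2 := hP.subtype_image h1
    convert h2 using 1
    ext x
    simp [and_comm]
  refine ⟨g, _, hg1, hmeas, ?_⟩
  have hsub : P ∩ S j ⊆ P ∩ {x ∈ P | f x = g x} := fun x hx => ⟨hx.1, hx.1, hg2 hx.2⟩
  have h1 := measure_inter_add_sdiff P hmeas (μ := volume)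
  have h2 := measure_mono (μ := volume) hsub
  rw [← h1] at hj
  exact lt_of_add_lt_add_left (hj.trans_le (add_le_add_left h2 ε))

/-- A bounded measurable a.e. approximately differentiable map coincides with a
`C¹`-smooth map outside a set of arbitrarily small measure. -/
theorem exists_C1_extension_of_approx_differentiable {n m : ℕ}
    (P : Set (EuclideanSpace ℝ (Fin n))) (hP : MeasurableSet P)
    (hPb : Bornology.IsBounded P)
    (f : EuclideanSpace ℝ (Fin n) → EuclideanSpace ℝ (Fin m))
    (hf : Measurable (fun x : P => f x))
    (hap : ∀ᵐ a ∂volume, a ∈ P →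
      ∃ L : EuclideanSpace ℝ (Fin n) →ₗ[ℝ] EuclideanSpace ℝ (Fin m),
        IsApproxDifferential P f a L) :
    ∀ ε : ℝ, 0 < ε →
      ∃ Q : Set (EuclideanSpace ℝ (Fin n)), IsClosed Q ∧ Q ⊆ P ∧
        volume (P \ Q) < ENNReal.ofReal ε ∧
        ∃ g : EuclideanSpace ℝ (Fin n) → EuclideanSpace ℝ (Fin m),
          ContDiff ℝ 1 g ∧ EqOn g f Q := by
  intro ε hε
  have hε2 : 0 < ENNReal.ofReal ε / 3 :=
    ENNReal.div_pos (ENNReal.ofReal_pos.2 hε).ne' (by simp)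
  have hPf : volume P ≠ ∞ := hPb.measure_lt_top.ne
  obtain ⟨g, M, hg, hA, hPA⟩ := aux_reduce P hP hPf f hf hap _ hε2
  set A := {x ∈ P | f x = g x}
  have hAP : A ⊆ P := fun x hx => hx.1
  obtain ⟨K, hKA, hK, hAK⟩ := hA.exists_isCompact_sdiff_lt (μ := volume)
    (ne_top_of_le_ne_top hPf (measure_mono hAP)) hε2.ne'
  obtain ⟨Q, hQK, hQ, hKQ, h, hh, hhg⟩ := aux_lip volume K hK g M hg _ hε2
  refine ⟨Q, hQ, hQK.trans (hKA.trans hAP), ?_, h, hh, fun x hx => ?_⟩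
  · have hsub : P \ Q ⊆ (P \ A) ∪ (A \ K) ∪ (K \ Q) := by
      intro x hx
      by_cases h1 : x ∈ A
      · by_cases h2 : x ∈ K
        · exact Or.inr ⟨h2, hx.2⟩
        · exact Or.inl (Or.inr ⟨h1, h2⟩)
      · exact Or.inl (Or.inl ⟨hx.1, h1⟩)
    refine lt_of_le_of_lt ((measure_mono hsub).trans ((measure_union_le _ _).trans
      (add_le_add_left (measure_union_le _ _) _))) ?_
    refine (ENNReal.add_lt_add (ENNReal.add_lt_add hPA hAK) hKQ).trans_le ?_
    rw [ENNReal.add_thirds]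
  · rw [hhg hx]
    exact (hKA (hQK hx)).2.symm
end
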